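/- Additivity of the geometric Rényi channel divergence: Let α ∈ (1,2] and let E₁, F₁ : M_{d₁}(ℂ) → M_{d₁'}(ℂ) and E₂, F₂ : M_{d₂}(ℂ) → M_{d₂'}(ℂ) be quantum channels. Then 𝐷̂_α(E₁ ⊗ E₂ ‖ F₁ ⊗ F₂) = 𝐷̂_α(E₁‖F₁) + 𝐷̂_α(E₂‖F₂) as extended reals, where E₁ ⊗ E₂ denotes the tensor product channel acting on M_{d₁d₂}(ℂ) ≅ M_{d₁}(ℂ) ⊗ M_{d₂}(ℂ) via Kronecker products. -/

import Mathlib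

open scoped Kronecker ComplexOrder

noncomputable section

namespace QCD

attribute [local instance] Classical.propDecidable

variable {n m : Type} [Fintype n] [DecidableEq n] [Fintype m] [DecidableEq m]

/-- The real part of the trace of a complex matrix. -/
def rtr (A : Matrix n n ℂ) : ℝ := (A.trace).re

/-- A quantum state: positive semidefinite with trace one. -/
def IsState (ρ : Matrix n n ℂ) : Prop := ρ.PosSemidef ∧ ρ.trace = 1

/-- Loewner order: `A ≤ B` iff `B - A` is positive semidefinite. -/
def loewnerLE (A B : Matrix n n ℂ) : Prop := (B - A).PosSemidef

/-- Support containment (for PSD matrices): `ker σ ⊆ ker ρ`. -/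
def SuppLE (ρ σ : Matrix n n ℂ) : Prop := ∀ v : n → ℂ, σ.mulVec v = 0 → ρ.mulVec v = 0

/-- Functional calculus for Hermitian matrices (junk value `0` otherwise). -/
def matFun (f : ℝ → ℝ) (A : Matrix n n ℂ) : Matrix n n ℂ :=
  if hA : A.IsHermitian then
    (hA.eigenvectorUnitary : Matrix n n ℂ) *
      Matrix.diagonal (fun i => (f (hA.eigenvalues i) : ℂ)) *
      (star (hA.eigenvectorUnitary : Matrix n n ℂ))
  else 0

/-- Matrix square root via functional calculus. -/
def msqrt (A : Matrix n n ℂ) : Matrix n n ℂ := matFun Real.sqrt A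

/-- Matrix real power taken on the support (`0 ^ t := 0`). -/
def mpow (A : Matrix n n ℂ) (t : ℝ) : Matrix n n ℂ :=
  matFun (fun x => if x = 0 then 0 else x ^ t) A

/-- Matrix base-2 logarithm on the support. -/
def mlog (A : Matrix n n ℂ) : Matrix n n ℂ := matFun (Real.logb 2) A

/-- Positive part of a Hermitian matrix. -/
def mposPart (A : Matrix n n ℂ) : Matrix n n ℂ := matFun (fun x => max x 0) A

/-- Trace norm. -/
def traceNorm (A : Matrix n m ℂ) : ℝ := rtr (msqrt (A.conjTranspose * A))

/-- Base-2 logarithm as an extended real (`⊥` on nonpositive input). -/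
def elog (x : ℝ) : EReal := if x ≤ 0 then ⊥ else ((Real.logb 2 x : ℝ) : EReal)

/-- Base-2 logarithm of an extended real. -/
def elogE (x : EReal) : EReal := if x = ⊤ then ⊤ else elog x.toReal

/-- `2 ^ x` for an extended real `x`. -/
def epow2 (x : EReal) : EReal :=
  if x = ⊤ then ⊤ else if x = ⊥ then 0 else ((((2:ℝ) ^ x.toReal : ℝ)) : EReal)

/-- Umegaki relative entropy (base 2), `⊤` if the support condition fails. -/
def relEntropy (ρ σ : Matrix n n ℂ) : EReal :=
  if SuppLE ρ σ then ((rtr (ρ * (mlog ρ - mlog σ)) : ℝ) : EReal) else ⊤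

/-- Petz–Rényi divergence (base 2). -/
def petzRenyi (α : ℝ) (ρ σ : Matrix n n ℂ) : EReal :=
  if 1 < α ∧ ¬ SuppLE ρ σ then ⊤
  else (((α - 1)⁻¹ : ℝ) : EReal) * elog (rtr (mpow ρ α * mpow σ (1 - α)))

/-- Geometric (maximal) Rényi divergence (base 2). -/
def geomRenyi (α : ℝ) (ρ σ : Matrix n n ℂ) : EReal :=
  if SuppLE ρ σ then
    (((α - 1)⁻¹ : ℝ) : EReal) *
      elog (rtr (σ * mpow (mpow σ (-(1/2 : ℝ)) * ρ * mpow σ (-(1/2 : ℝ))) α))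
  else ⊤

/-- Max-relative entropy (base 2). -/
def dMax (ρ σ : Matrix n n ℂ) : EReal :=
  sInf {x : EReal | ∃ lam : ℝ, x = (lam : EReal) ∧ loewnerLE ρ ((((2:ℝ) ^ lam : ℝ) : ℂ) • σ)}

/-- Uhlmann fidelity. -/
def fidelity (ρ σ : Matrix n n ℂ) : ℝ := (rtr (msqrt (msqrt σ * ρ * msqrt σ))) ^ 2

/-- Sine (purified) distance. -/
def sineDist (ρ σ : Matrix n n ℂ) : ℝ := Real.sqrt (1 - fidelity ρ σ)

/-- Smoothed max-relative entropy: smoothing over states in the sine-distance ball. -/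
def dMaxSmooth (δ : ℝ) (ρ σ : Matrix n n ℂ) : EReal :=
  ⨅ (ρ' : Matrix n n ℂ) (_ : IsState ρ' ∧ sineDist ρ ρ' ≤ δ), dMax ρ' σ

/-- Hypothesis testing divergence (base 2). -/
def dH (ε : ℝ) (ρ σ : Matrix n n ℂ) : EReal :=
  - elog (sInf {x : ℝ | ∃ T : Matrix n n ℂ,
      T.PosSemidef ∧ ((1 : Matrix n n ℂ) - T).PosSemidef ∧ 1 - ε ≤ rtr (T * ρ) ∧ x = rtr (T * σ)})

/-- The quantity `c_γ(ρ‖σ)`. -/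
def cGamma (γ : ℝ) (ρ σ : Matrix n n ℂ) : EReal :=
  ((γ⁻¹ : ℝ) : EReal) *
    elogE (epow2 ((γ : ℝ) * petzRenyi (1 + γ) ρ σ) +
           epow2 (((-γ : ℝ) : EReal) * petzRenyi (1 - γ) ρ σ) + 1)

/-- Binary entropy (base 2). -/
def binEnt (x : ℝ) : ℝ := -(x * Real.logb 2 x) - (1 - x) * Real.logb 2 (1 - x)

/-- Action of `id_k ⊗ Φ` on block matrices. -/
def blockApply {k : Type} (Φ : Matrix n n ℂ →ₗ[ℂ] Matrix m m ℂ)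
    (M : Matrix (k × n) (k × n) ℂ) : Matrix (k × m) (k × m) ℂ :=
  Matrix.of fun p q => Φ (Matrix.of fun a b => M (p.1, a) (q.1, b)) p.2 q.2

/-- Action of `Φ ⊗ id_k` on block matrices. -/
def blockApplyRight {k : Type} (Φ : Matrix n n ℂ →ₗ[ℂ] Matrix m m ℂ)
    (M : Matrix (n × k) (n × k) ℂ) : Matrix (m × k) (m × k) ℂ :=
  Matrix.of fun p q => Φ (Matrix.of fun a b => M (a, p.2) (b, q.2)) p.1 q.1

/-- Quantum channel: trace preserving and completely positive. -/
def IsQChannel (Φ : Matrix n n ℂ →ₗ[ℂ] Matrix m m ℂ) : Prop :=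
  (∀ M : Matrix n n ℂ, (Φ M).trace = M.trace) ∧
  (∀ k : ℕ, 1 ≤ k → ∀ M : Matrix (Fin k × n) (Fin k × n) ℂ, M.PosSemidef →
    (blockApply Φ M).PosSemidef)

/-- `id_k ⊗ Φ` as a linear map. -/
def blockApplyL (k : Type) (Φ : Matrix n n ℂ →ₗ[ℂ] Matrix m m ℂ) :
    Matrix (k × n) (k × n) ℂ →ₗ[ℂ] Matrix (k × m) (k × m) ℂ where
  toFun := blockApply Φ
  map_add' M N := by
    ext p q
    show Φ (Matrix.of fun a b => (M + N) (p.1, a) (q.1, b)) p.2 q.2 = _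
    have h : (Matrix.of fun a b => (M + N) (p.1, a) (q.1, b)) =
        (Matrix.of fun a b => M (p.1, a) (q.1, b)) +
          (Matrix.of fun a b => N (p.1, a) (q.1, b)) := rfl
    rw [h, map_add]
    rfl
  map_smul' c M := by
    ext p q
    show Φ (Matrix.of fun a b => (c • M) (p.1, a) (q.1, b)) p.2 q.2 = _
    have h : (Matrix.of fun a b => (c • M) (p.1, a) (q.1, b)) =
        c • (Matrix.of fun a b => M (p.1, a) (q.1, b)) := rfl
    rw [h, map_smul]
    rfl

/-- `Φ ⊗ id_k` as a linear map. -/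
def blockApplyRightL (k : Type) (Φ : Matrix n n ℂ →ₗ[ℂ] Matrix m m ℂ) :
    Matrix (n × k) (n × k) ℂ →ₗ[ℂ] Matrix (m × k) (m × k) ℂ where
  toFun := blockApplyRight Φ
  map_add' M N := by
    ext p q
    show Φ (Matrix.of fun a b => (M + N) (a, p.2) (b, q.2)) p.1 q.1 = _
    have h : (Matrix.of fun a b => (M + N) (a, p.2) (b, q.2)) =
        (Matrix.of fun a b => M (a, p.2) (b, q.2)) +
          (Matrix.of fun a b => N (a, p.2) (b, q.2)) := rfl
    rw [h, map_add]
    rfl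
  map_smul' c M := by
    ext p q
    show Φ (Matrix.of fun a b => (c • M) (a, p.2) (b, q.2)) p.1 q.1 = _
    have h : (Matrix.of fun a b => (c • M) (a, p.2) (b, q.2)) =
        c • (Matrix.of fun a b => M (a, p.2) (b, q.2)) := rfl
    rw [h, map_smul]
    rfl

/-- Tensor product of two channels (Kronecker product action). -/
def tensorChannel {n₁ m₁ n₂ m₂ : Type}
    (E₁ : Matrix n₁ n₁ ℂ →ₗ[ℂ] Matrix m₁ m₁ ℂ) (E₂ : Matrix n₂ n₂ ℂ →ₗ[ℂ] Matrix m₂ m₂ ℂ) :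
    Matrix (n₁ × n₂) (n₁ × n₂) ℂ →ₗ[ℂ] Matrix (m₁ × m₂) (m₁ × m₂) ℂ :=
  (blockApplyRightL m₂ E₁).comp (blockApplyL n₁ E₂)

/-- Index type for `k`-fold tensor powers. -/
def tpow (ι : Type) : ℕ → Type
  | 0 => PUnit
  | (k+1) => tpow ι k × ι

def tpowFintype (ι : Type) [Fintype ι] : ∀ k : ℕ, Fintype (tpow ι k)
  | 0 => inferInstanceAs (Fintype PUnit)
  | (k+1) => letI := tpowFintype ι k; inferInstanceAs (Fintype (tpow ι k × ι))

instance (ι : Type) [Fintype ι] (k : ℕ) : Fintype (tpow ι k) := tpowFintype ι k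

def tpowDecEq (ι : Type) [DecidableEq ι] : ∀ k : ℕ, DecidableEq (tpow ι k)
  | 0 => inferInstanceAs (DecidableEq PUnit)
  | (k+1) => letI := tpowDecEq ι k; inferInstanceAs (DecidableEq (tpow ι k × ι))

instance (ι : Type) [DecidableEq ι] (k : ℕ) : DecidableEq (tpow ι k) := tpowDecEq ι k

/-- `k`-fold Kronecker tensor power of a matrix. -/
def tpowMat (ρ : Matrix n n ℂ) : ∀ k : ℕ, Matrix (tpow n k) (tpow n k) ℂ
  | 0 => 1
  | (k+1) => (tpowMat ρ k) ⊗ₖ ρ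

/-- `k`-fold tensor power of a channel. -/
def tpowChannel (Φ : Matrix n n ℂ →ₗ[ℂ] Matrix m m ℂ) :
    ∀ k : ℕ, Matrix (tpow n k) (tpow n k) ℂ →ₗ[ℂ] Matrix (tpow m k) (tpow m k) ℂ
  | 0 => LinearMap.id
  | (k+1) => tensorChannel (tpowChannel Φ k) Φ

/-- Channel divergence induced by a divergence `𝔇` on states:
sup over `k ≥ 1` and input states `ν` on `ℂ^k ⊗ ℂ^d`. -/
def chDiv (𝔇 : ∀ (p : Type) [Fintype p] [DecidableEq p], Matrix p p ℂ → Matrix p p ℂ → EReal)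
    (E F : Matrix n n ℂ →ₗ[ℂ] Matrix m m ℂ) : EReal :=
  ⨆ (k : ℕ) (_ : 1 ≤ k) (ν : Matrix (Fin k × n) (Fin k × n) ℂ) (_ : IsState ν),
    𝔇 (Fin k × m) (blockApply E ν) (blockApply F ν)

/-- The geometric Rényi divergence as a divergence family. -/
def geomD (α : ℝ) : ∀ (p : Type) [Fintype p] [DecidableEq p],
    Matrix p p ℂ → Matrix p p ℂ → EReal :=
  fun _ _ _ => geomRenyi α

/-- The Umegaki relative entropy as a divergence family. -/
def relD : ∀ (p : Type) [Fintype p] [DecidableEq p],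
    Matrix p p ℂ → Matrix p p ℂ → EReal :=
  fun _ _ _ => relEntropy

/-- The hypothesis testing divergence as a divergence family. -/
def dHD (ε : ℝ) : ∀ (p : Type) [Fintype p] [DecidableEq p],
    Matrix p p ℂ → Matrix p p ℂ → EReal :=
  fun _ _ _ => dH ε

/-- Regularized channel relative entropy. -/
def regRelEntropy (E F : Matrix n n ℂ →ₗ[ℂ] Matrix m m ℂ) : EReal :=
  ⨆ (k : ℕ) (_ : 1 ≤ k),
    (((k : ℝ)⁻¹ : ℝ) : EReal) * chDiv relD (tpowChannel E k) (tpowChannel F k)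

end QCD

/-!
Write `P(C, D) = D^{1/2} (D^{-1/2} C D^{-1/2})^α D^{1/2}` for the operator perspective of
`x ↦ x ^ α`. The divergence of two channels with Choi matrices `C` and `D` has the closed form
`(α - 1)⁻¹ log ‖Tr_out P(C, D)‖`, and everything in it is multiplicative under Kronecker products.

A pure input with coefficient matrix `X` turns `C` and `D` into `V C Vᴴ` and `V D Vᴴ`, where
`V = X ⊗ 1`. As `x ↦ x ^ (α - 1)` is operator monotone, the perspective satisfies the transformer
inequality `P(V C Vᴴ, V D Vᴴ) ≤ V P(C, D) Vᴴ`, which bounds the divergence by the closed form; a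
mixed input is a sum of pure ones and is handled by a block row of such `V`. For invertible `X` the
inequality applied to `V⁻¹` gives equality, and the inputs with `Xᴴ X` positive definite suffice to
recover the operator norm.
-/

namespace QCD

open Matrix Polynomial
open scoped MatrixOrder Matrix.Norms.L2Operator

theorem isHermitian_diagonal_ofReal {n : Type*} [DecidableEq n] (d : n → ℝ) :
    (diagonal fun i => (d i : ℂ)).IsHermitian :=
  isHermitian_diagonal_of_self_adjoint _ (funext fun i => Complex.conj_ofReal (d i))

section FunctionalCalculus

variable {n m : Type} [Fintype n] [DecidableEq n] [Fintype m] [DecidableEq m]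

theorem matFun_eq_cfc (f : ℝ → ℝ) (A : Matrix n n ℂ) : matFun f A = cfc f A := by
  by_cases hA : A.IsHermitian
  · rw [matFun, dif_pos hA, hA.cfc_eq]
    rfl
  · exact (dif_neg hA).trans (cfc_apply_of_not_predicate A hA).symm

theorem exists_polynomial_eqOn {K : Type*} [Field K] {s : Set K} (hs : s.Finite) (f : K → K) :
    ∃ p : K[X], ∀ x ∈ s, p.eval x = f x := by
  classical
  exact ⟨Lagrange.interpolate hs.toFinset id f, fun _ hx =>
    Lagrange.eval_interpolate_at_node f (Set.injOn_id _) (hs.mem_toFinset.2 hx)⟩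

theorem matFun_eq_aeval {f : ℝ → ℝ} {A : Matrix n n ℂ} (hA : A.IsHermitian) {p : ℝ[X]}
    (hp : ∀ x ∈ spectrum ℝ A, p.eval x = f x) : matFun f A = aeval A p := by
  rw [matFun_eq_cfc]
  exact (cfc_congr fun x hx => (hp x hx).symm).trans (cfc_polynomial p A hA.isSelfAdjoint)

theorem aeval_mul_eq_mul_aeval {R S n m : Type*} [CommSemiring R] [Semiring S] [Algebra R S]
    [Fintype n] [DecidableEq n] [Fintype m] [DecidableEq m] {A : Matrix n n S} {B : Matrix m m S}
    {K : Matrix n m S} (h : A * K = K * B) (p : R[X]) : aeval A p * K = K * aeval B p := by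
  induction p using Polynomial.induction_on' with
  | add p q hp hq => simp only [map_add, Matrix.add_mul, Matrix.mul_add, hp, hq]
  | monomial k a =>
    have hpow : A ^ k * K = K * B ^ k := by
      induction k with
      | zero => rw [pow_zero, pow_zero, Matrix.one_mul, Matrix.mul_one]
      | succ k ih => rw [pow_succ', pow_succ', Matrix.mul_assoc, ih, ← Matrix.mul_assoc, h,
          Matrix.mul_assoc]
    simp only [aeval_monomial, ← Algebra.smul_def, Matrix.smul_mul, Matrix.mul_smul, hpow]

theorem matFun_mul_eq_mul_matFun (f : ℝ → ℝ) {A : Matrix n n ℂ} {B : Matrix m m ℂ}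
    (hA : A.IsHermitian) (hB : B.IsHermitian) {K : Matrix n m ℂ} (h : A * K = K * B) :
    matFun f A * K = K * matFun f B := by
  obtain ⟨p, hp⟩ := exists_polynomial_eqOn
    (A.finite_real_spectrum.union B.finite_real_spectrum) f
  rw [matFun_eq_aeval hA fun x hx => hp x (Or.inl hx),
    matFun_eq_aeval hB fun x hx => hp x (Or.inr hx), aeval_mul_eq_mul_aeval h]

theorem matFun_unitary_conj (f : ℝ → ℝ) {A : Matrix n n ℂ} (hA : A.IsHermitian)
    {U : Matrix m n ℂ} (hU : Uᴴ * U = 1) (hU' : U * Uᴴ = 1) :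
    matFun f (U * A * Uᴴ) = U * matFun f A * Uᴴ := by
  rw [← matFun_mul_eq_mul_matFun f (isHermitian_mul_mul_conjTranspose U hA) hA
    (by rw [Matrix.mul_assoc, hU, Matrix.mul_one]), Matrix.mul_assoc _ U, hU', Matrix.mul_one]

theorem matFun_diagonal (f : ℝ → ℝ) (d : n → ℝ) :
    matFun f (diagonal fun i => (d i : ℂ)) = diagonal fun i => (f (d i) : ℂ) := by
  obtain ⟨p, hp⟩ := exists_polynomial_eqOn
    ((diagonal fun i => (d i : ℂ)).finite_real_spectrum.union (Set.finite_range d)) f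
  have haeval : aeval (diagonal fun i => (d i : ℂ)) p =
      diagonal fun i => ((p.eval (d i) : ℝ) : ℂ) := by
    refine (aeval_algHom_apply (diagonalAlgHom ℝ : (n → ℂ) →ₐ[ℝ] Matrix n n ℂ)
      (fun i => (d i : ℂ)) p).trans (congrArg diagonal (funext fun i => ?_))
    rw [aeval_pi_apply]
    exact aeval_algebraMap_apply_eq_algebraMap_eval (d i) p
  rw [matFun_eq_aeval (isHermitian_diagonal_ofReal d) fun x hx => hp x (Or.inl hx), haeval]
  simp only [hp _ (Or.inr ⟨_, rfl⟩)]

theorem mpow_eq_cfc (A : Matrix n n ℂ) (t : ℝ) :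
    mpow A t = cfc (fun x : ℝ => if x = 0 then 0 else x ^ t) A :=
  matFun_eq_cfc _ A

theorem mpow_isHermitian (A : Matrix n n ℂ) (t : ℝ) : (mpow A t).IsHermitian := by
  rw [mpow_eq_cfc]
  exact cfc_predicate _ A

theorem mpow_mul_mpow {A : Matrix n n ℂ} (hA : A.PosSemidef) (s t : ℝ) :
    mpow A s * mpow A t = mpow A (s + t) := by
  have hcont (f : ℝ → ℝ) : ContinuousOn f (spectrum ℝ A) := A.finite_real_spectrum.continuousOn f
  simp only [mpow_eq_cfc, ← cfc_mul _ _ A (hcont _) (hcont _)]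
  refine cfc_congr fun x hx => ?_
  have hx0 : 0 ≤ x := spectrum_nonneg_of_nonneg hA.nonneg hx
  rcases hx0.eq_or_lt with rfl | hpos
  · simp only [if_true, mul_zero]
  · simp only [hpos.ne', if_false, Real.rpow_add hpos]

theorem mpow_eq_rpow {A : Matrix n n ℂ} (hA : A.PosSemidef) {t : ℝ} (ht : t ≠ 0) :
    mpow A t = A ^ t := by
  rw [CFC.rpow_eq_cfc_real (a := A) hA.nonneg, mpow_eq_cfc]
  refine cfc_congr fun x _ => ?_
  split_ifs with hx
  · rw [hx, Real.zero_rpow ht]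
  · rfl

theorem mpow_one {A : Matrix n n ℂ} (hA : A.PosSemidef) : mpow A 1 = A := by
  rw [mpow_eq_rpow hA one_ne_zero, CFC.rpow_one A hA.nonneg]

theorem one_mpow (t : ℝ) : mpow (1 : Matrix n n ℂ) t = 1 := by
  simp only [mpow_eq_cfc, cfc_apply_one, one_ne_zero, if_false, Real.one_rpow, map_one]

theorem zero_mpow (t : ℝ) : mpow (0 : Matrix n n ℂ) t = 0 := by
  simp only [mpow_eq_cfc, cfc_apply_zero, if_true, map_zero]

theorem mpow_le_mpow {A B : Matrix n n ℂ} (hA : A.PosSemidef) (hAB : A ≤ B) {t : ℝ}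
    (ht : t ∈ Set.Ioc 0 1) : mpow A t ≤ mpow B t := by
  have hB : B.PosSemidef := nonneg_iff_posSemidef.1 (hA.nonneg.trans hAB)
  rw [mpow_eq_rpow hA ht.1.ne', mpow_eq_rpow hB ht.1.ne']
  exact CFC.rpow_le_rpow ⟨ht.1.le, ht.2⟩ hAB

theorem mpow_submatrix {A : Matrix n n ℂ} (hA : A.IsHermitian) (t : ℝ) (e : m ≃ n) :
    mpow (A.submatrix e e) t = (mpow A t).submatrix e e := by
  have hconj (B : Matrix n n ℂ) : B.submatrix e e =
      (1 : Matrix n n ℂ).submatrix e id * B * ((1 : Matrix n n ℂ).submatrix e id)ᴴ := by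
    ext i j
    simp [Matrix.mul_apply, Matrix.one_apply]
  rw [hconj A, hconj (mpow A t)]
  refine matFun_unitary_conj _ hA ?_ ?_ <;> rw [conjTranspose_submatrix, conjTranspose_one]
  · rw [submatrix_mul_equiv, Matrix.one_mul, submatrix_id_id]
  · rw [← submatrix_mul _ _ _ _ _ Function.bijective_id, Matrix.one_mul, submatrix_one_equiv]

theorem exists_unitary_diagonal {A : Matrix n n ℂ} (hA : A.PosSemidef) :
    ∃ (U : Matrix n n ℂ) (a : n → ℝ), Uᴴ * U = 1 ∧ U * Uᴴ = 1 ∧ (∀ i, 0 ≤ a i) ∧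
      A = U * (diagonal fun i => (a i : ℂ)) * Uᴴ :=
  ⟨hA.1.eigenvectorUnitary, hA.1.eigenvalues, Unitary.coe_star_mul_self _,
    Unitary.coe_mul_star_self _, hA.eigenvalues_nonneg, hA.1.spectral_theorem⟩

theorem mpow_unitary_conj_diagonal (t : ℝ) (a : n → ℝ) {U : Matrix n n ℂ} (hU : Uᴴ * U = 1)
    (hU' : U * Uᴴ = 1) : mpow (U * (diagonal fun i => (a i : ℂ)) * Uᴴ) t =
      U * (diagonal fun i => ((if a i = 0 then 0 else a i ^ t : ℝ) : ℂ)) * Uᴴ := by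
  rw [mpow, matFun_unitary_conj _ (isHermitian_diagonal_ofReal a) hU hU', matFun_diagonal]

theorem conj_diagonal_kronecker_conj_diagonal (U : Matrix n n ℂ) (V : Matrix m m ℂ) (a : n → ℝ)
    (b : m → ℝ) :
    (U * (diagonal fun i => (a i : ℂ)) * Uᴴ) ⊗ₖ (V * (diagonal fun j => (b j : ℂ)) * Vᴴ) =
      (U ⊗ₖ V) * (diagonal fun p : n × m => ((a p.1 * b p.2 : ℝ) : ℂ)) * (U ⊗ₖ V)ᴴ := by
  simp only [mul_kronecker_mul, diagonal_kronecker_diagonal, conjTranspose_kronecker,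
    Complex.ofReal_mul]

theorem conjTranspose_kronecker_mul_kronecker_eq_one {R n m : Type*} [CommSemiring R] [StarRing R]
    [Fintype n] [DecidableEq n] [Fintype m] [DecidableEq m] {U : Matrix n n R} {V : Matrix m m R}
    (hU : Uᴴ * U = 1) (hV : Vᴴ * V = 1) : (U ⊗ₖ V)ᴴ * (U ⊗ₖ V) = 1 := by
  rw [conjTranspose_kronecker, ← mul_kronecker_mul, hU, hV, one_kronecker_one]

theorem kronecker_mul_conjTranspose_kronecker_eq_one {R n m : Type*} [CommSemiring R] [StarRing R]
    [Fintype n] [DecidableEq n] [Fintype m] [DecidableEq m] {U : Matrix n n R} {V : Matrix m m R}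
    (hU : U * Uᴴ = 1) (hV : V * Vᴴ = 1) : (U ⊗ₖ V) * (U ⊗ₖ V)ᴴ = 1 := by
  rw [conjTranspose_kronecker, ← mul_kronecker_mul, hU, hV, one_kronecker_one]

theorem mpow_kronecker {A : Matrix n n ℂ} {B : Matrix m m ℂ} (hA : A.PosSemidef)
    (hB : B.PosSemidef) (t : ℝ) : mpow (A ⊗ₖ B) t = mpow A t ⊗ₖ mpow B t := by
  obtain ⟨U, a, hU, hU', ha, rfl⟩ := exists_unitary_diagonal hA
  obtain ⟨V, b, hV, hV', hb, rfl⟩ := exists_unitary_diagonal hB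
  have hpow (i : n × m) : (if a i.1 * b i.2 = 0 then 0 else (a i.1 * b i.2) ^ t) =
      (if a i.1 = 0 then 0 else a i.1 ^ t) * (if b i.2 = 0 then 0 else b i.2 ^ t) := by
    by_cases ha0 : a i.1 = 0 <;> by_cases hb0 : b i.2 = 0 <;>
      simp [ha0, hb0, Real.mul_rpow (ha i.1) (hb i.2)]
  rw [conj_diagonal_kronecker_conj_diagonal, mpow_unitary_conj_diagonal,
    mpow_unitary_conj_diagonal t a hU hU', mpow_unitary_conj_diagonal t b hV hV',
    conj_diagonal_kronecker_conj_diagonal]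
  · simp only [hpow]
  · exact conjTranspose_kronecker_mul_kronecker_eq_one hU hV
  · exact kronecker_mul_conjTranspose_kronecker_eq_one hU' hV'

end FunctionalCalculus

section Perspective

variable {n m : Type} [Fintype n] [DecidableEq n] [Fintype m] [DecidableEq m]

theorem conj_le_conj {n m : Type*} [Fintype n] [Finite m] {A B : Matrix n n ℂ} (h : A ≤ B)
    (V : Matrix m n ℂ) : V * A * Vᴴ ≤ V * B * Vᴴ := by
  rw [le_iff, ← Matrix.sub_mul, ← Matrix.mul_sub]
  exact (le_iff.1 h).mul_mul_conjTranspose_same V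

theorem mpow_self_mul_conjTranspose (A : Matrix n m ℂ) (t : ℝ) :
    mpow (A * Aᴴ) t = A * mpow (Aᴴ * A) (t - 1) * Aᴴ := by
  have hA : (A * Aᴴ).PosSemidef := posSemidef_self_mul_conjTranspose A
  have h : mpow (A * Aᴴ) (t - 1) * A = A * mpow (Aᴴ * A) (t - 1) :=
    matFun_mul_eq_mul_matFun _ hA.1 (isHermitian_conjTranspose_mul_self A) (Matrix.mul_assoc _ _ _)
  calc mpow (A * Aᴴ) t = mpow (A * Aᴴ) (t - 1) * mpow (A * Aᴴ) 1 := by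
        rw [mpow_mul_mpow hA, sub_add_cancel]
    _ = A * mpow (Aᴴ * A) (t - 1) * Aᴴ := by rw [mpow_one hA, ← Matrix.mul_assoc, h]

theorem mpow_half_mul_mpow_half {A : Matrix n n ℂ} (hA : A.PosSemidef) :
    mpow A (1 / 2) * mpow A (1 / 2) = A := by
  rw [mpow_mul_mpow hA, add_halves, mpow_one hA]

/- Writing `T = R²`, the matrices `W T Wᴴ` and `R Wᴴ W R ≤ T` are `A Aᴴ` and `Aᴴ A` for `A = W R`,
so the claim reduces to the operator monotonicity of the power `α - 1 ∈ (0, 1]`. -/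
theorem mpow_conj_le_conj_mpow {α : ℝ} (hα : 1 < α ∧ α ≤ 2) {T : Matrix n n ℂ}
    (hT : T.PosSemidef) {W : Matrix m n ℂ} (hW : Wᴴ * W ≤ 1) :
    mpow (W * T * Wᴴ) α ≤ W * mpow T α * Wᴴ := by
  set R := mpow T (1 / 2) with hR
  have hRR : R * R = T := mpow_half_mul_mpow_half hT
  have hRH : Rᴴ = R := mpow_isHermitian T _
  have hself : W * T * Wᴴ = (W * R) * (W * R)ᴴ := by
    simp only [← hRR, conjTranspose_mul, hRH, Matrix.mul_assoc]
  have hle : (W * R)ᴴ * (W * R) ≤ T := by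
    simpa only [conjTranspose_mul, hRH, hRR, Matrix.mul_assoc, Matrix.one_mul]
      using conj_le_conj hW R
  have hpow : R * mpow T (α - 1) * R = mpow T α := by
    rw [hR, mpow_mul_mpow hT, mpow_mul_mpow hT]
    ring_nf
  calc mpow (W * T * Wᴴ) α
      = W * R * mpow ((W * R)ᴴ * (W * R)) (α - 1) * (W * R)ᴴ := by
        rw [hself, mpow_self_mul_conjTranspose]
    _ ≤ W * R * mpow T (α - 1) * (W * R)ᴴ :=
        conj_le_conj (mpow_le_mpow (posSemidef_conjTranspose_mul_self _) hle
          ⟨by linarith, by linarith⟩) _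
    _ = W * mpow T α * Wᴴ := by
        simp only [← hpow, conjTranspose_mul, hRH, Matrix.mul_assoc]

theorem mpow_zero_mul_of_self_mul_conjTranspose {n : Type*} [Fintype n] (Y : Matrix m n ℂ) :
    mpow (Y * Yᴴ) 0 * Y = Y := by
  have hY : (Y * Yᴴ).PosSemidef := posSemidef_self_mul_conjTranspose Y
  have h : (mpow (Y * Yᴴ) 0 - 1) * (Y * Yᴴ) = 0 := by
    nth_rw 2 [← mpow_one hY]
    rw [Matrix.sub_mul, mpow_mul_mpow hY, zero_add, Matrix.one_mul, sub_self]
  rw [mul_self_mul_conjTranspose_eq_zero, Matrix.sub_mul, Matrix.one_mul] at h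
  exact sub_eq_zero.1 h

/-- The partial isometry `(Y Yᴴ)^{-1/2} Y` of the polar decomposition of `Y`. -/
def polarFactor {n : Type} [Fintype n] (Y : Matrix m n ℂ) : Matrix m n ℂ :=
  mpow (Y * Yᴴ) (-(1 / 2)) * Y

theorem mpow_half_mul_polarFactor {n : Type} [Fintype n] (Y : Matrix m n ℂ) :
    mpow (Y * Yᴴ) (1 / 2) * polarFactor Y = Y := by
  rw [polarFactor, ← Matrix.mul_assoc, mpow_mul_mpow (posSemidef_self_mul_conjTranspose Y),
    add_neg_cancel, mpow_zero_mul_of_self_mul_conjTranspose]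

theorem polarFactor_conjTranspose_mul_self_le_one (Y : Matrix m n ℂ) :
    (polarFactor Y)ᴴ * polarFactor Y ≤ 1 := by
  have hY : (Y * Yᴴ).PosSemidef := posSemidef_self_mul_conjTranspose Y
  have hrange : polarFactor Y * (polarFactor Y)ᴴ = mpow (Y * Yᴴ) 0 := by
    rw [polarFactor, conjTranspose_mul, mpow_isHermitian, Matrix.mul_assoc, ← Matrix.mul_assoc Y]
    nth_rw 2 [← mpow_one hY]
    rw [mpow_mul_mpow hY, mpow_mul_mpow hY]
    norm_num
  have hfix : polarFactor Y * (polarFactor Y)ᴴ * polarFactor Y = polarFactor Y := by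
    rw [hrange, polarFactor, ← Matrix.mul_assoc, mpow_mul_mpow hY, zero_add]
  have hproj : IsStarProjection ((polarFactor Y)ᴴ * polarFactor Y) :=
    ⟨by rw [IsIdempotentElem, Matrix.mul_assoc, ← Matrix.mul_assoc _ (polarFactor Y)ᴴ, hfix],
      isHermitian_conjTranspose_mul_self _⟩
  exact hproj.le_one

theorem SuppLE.mul_eq_zero {n : Type} {m : Type*} [Fintype n] {ρ σ : Matrix n n ℂ}
    (h : SuppLE ρ σ) {X : Matrix n m ℂ} (hX : σ * X = 0) : ρ * X = 0 := by
  ext i j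
  exact congrFun (h (X.col j) (funext fun i => congrFun (congrFun hX i) j)) i

theorem suppLE_iff_mul_mpow_zero {ρ σ : Matrix n n ℂ} (hσ : σ.PosSemidef) :
    SuppLE ρ σ ↔ ρ * mpow σ 0 = ρ := by
  constructor
  · intro h
    have hker : σ * (mpow σ 0 - 1) = 0 := by
      nth_rw 1 [← mpow_one hσ]
      rw [Matrix.mul_sub, mpow_mul_mpow hσ, add_zero, Matrix.mul_one, mpow_one hσ, sub_self]
    simpa only [Matrix.mul_sub, Matrix.mul_one, sub_eq_zero] using h.mul_eq_zero hker
  · intro h v hv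
    have hzero : mpow σ (-1) * σ = mpow σ 0 := by
      nth_rw 2 [← mpow_one hσ]
      rw [mpow_mul_mpow hσ, neg_add_cancel]
    rw [← h, ← hzero, ← mulVec_mulVec, ← mulVec_mulVec, hv, mulVec_zero, mulVec_zero]

/-- The relative quotient `σ^{-1/2} ρ σ^{-1/2}`, a noncommutative version of `ρ / σ`. -/
def relQuotient (ρ σ : Matrix n n ℂ) : Matrix n n ℂ :=
  mpow σ (-(1 / 2)) * ρ * mpow σ (-(1 / 2))

/-- The operator perspective `σ^{1/2} (σ^{-1/2} ρ σ^{-1/2})^α σ^{1/2}` of `x ↦ x ^ α`, also known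
as a weighted geometric mean; its trace is the quantity inside the geometric Rényi divergence. -/
def perspective (α : ℝ) (ρ σ : Matrix n n ℂ) : Matrix n n ℂ :=
  mpow σ (1 / 2) * mpow (relQuotient ρ σ) α * mpow σ (1 / 2)

theorem relQuotient_posSemidef {ρ : Matrix n n ℂ} (hρ : ρ.PosSemidef) (σ : Matrix n n ℂ) :
    (relQuotient ρ σ).PosSemidef := by
  have h := hρ.mul_mul_conjTranspose_same (mpow σ (-(1 / 2)))
  rwa [(mpow_isHermitian σ _).eq] at h

theorem perspective_eq_self_mul_conjTranspose (α : ℝ) {ρ : Matrix n n ℂ} (hρ : ρ.PosSemidef)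
    (σ : Matrix n n ℂ) : perspective α ρ σ =
      (mpow σ (1 / 2) * mpow (relQuotient ρ σ) (α / 2)) *
        (mpow σ (1 / 2) * mpow (relQuotient ρ σ) (α / 2))ᴴ := by
  rw [perspective, conjTranspose_mul, (mpow_isHermitian _ _).eq, (mpow_isHermitian _ _).eq,
    Matrix.mul_assoc, Matrix.mul_assoc, ← Matrix.mul_assoc (mpow (relQuotient ρ σ) (α / 2)),
    mpow_mul_mpow (relQuotient_posSemidef hρ σ), add_halves]

theorem perspective_posSemidef (α : ℝ) {ρ : Matrix n n ℂ} (hρ : ρ.PosSemidef)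
    (σ : Matrix n n ℂ) : (perspective α ρ σ).PosSemidef := by
  rw [perspective_eq_self_mul_conjTranspose α hρ]
  exact posSemidef_self_mul_conjTranspose _

theorem mpow_half_mul_relQuotient_mul_mpow_half {ρ σ : Matrix n n ℂ} (hρ : ρ.IsHermitian)
    (hσ : σ.PosSemidef) (h : SuppLE ρ σ) :
    mpow σ (1 / 2) * relQuotient ρ σ * mpow σ (1 / 2) = ρ := by
  have hright : ρ * mpow σ 0 = ρ := (suppLE_iff_mul_mpow_zero hσ).1 h
  have hleft : mpow σ 0 * ρ = ρ := by
    simpa only [conjTranspose_mul, (mpow_isHermitian σ 0).eq, hρ.eq]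
      using congrArg conjTranspose hright
  calc mpow σ (1 / 2) * relQuotient ρ σ * mpow σ (1 / 2)
      = (mpow σ (1 / 2) * mpow σ (-(1 / 2))) * ρ * (mpow σ (-(1 / 2)) * mpow σ (1 / 2)) := by
        simp only [relQuotient, Matrix.mul_assoc]
    _ = ρ := by
        rw [mpow_mul_mpow hσ, mpow_mul_mpow hσ, add_neg_cancel, neg_add_cancel, hleft, hright]

theorem eq_zero_of_perspective_eq_zero {α : ℝ} {ρ σ : Matrix n n ℂ} (hρ : ρ.PosSemidef)
    (hσ : σ.PosSemidef) (h : SuppLE ρ σ) (h0 : perspective α ρ σ = 0) : ρ = 0 := by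
  set T := relQuotient ρ σ
  have hT : T.PosSemidef := relQuotient_posSemidef hρ σ
  rw [perspective_eq_self_mul_conjTranspose α hρ, self_mul_conjTranspose_eq_zero] at h0
  calc ρ = mpow σ (1 / 2) * (mpow T (α / 2) * mpow T (1 - α / 2)) * mpow σ (1 / 2) := by
        rw [mpow_mul_mpow hT, add_sub_cancel, mpow_one hT,
          mpow_half_mul_relQuotient_mul_mpow_half hρ.1 hσ h]
    _ = 0 := by rw [← Matrix.mul_assoc, h0, Matrix.zero_mul, Matrix.zero_mul]

theorem zero_perspective (α : ℝ) (σ : Matrix n n ℂ) : perspective α 0 σ = 0 := by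
  simp only [perspective, relQuotient, Matrix.mul_zero, Matrix.zero_mul, zero_mpow]

theorem perspective_one_one (α : ℝ) : perspective α (1 : Matrix n n ℂ) 1 = 1 := by
  simp only [perspective, relQuotient, one_mpow, Matrix.mul_one]

theorem perspective_kronecker (α : ℝ) {ρ₁ σ₁ : Matrix n n ℂ} {ρ₂ σ₂ : Matrix m m ℂ}
    (hρ₁ : ρ₁.PosSemidef) (hσ₁ : σ₁.PosSemidef) (hρ₂ : ρ₂.PosSemidef) (hσ₂ : σ₂.PosSemidef) :
    perspective α (ρ₁ ⊗ₖ ρ₂) (σ₁ ⊗ₖ σ₂) = perspective α ρ₁ σ₁ ⊗ₖ perspective α ρ₂ σ₂ := by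
  have hT : relQuotient (ρ₁ ⊗ₖ ρ₂) (σ₁ ⊗ₖ σ₂) = relQuotient ρ₁ σ₁ ⊗ₖ relQuotient ρ₂ σ₂ := by
    simp only [relQuotient, mpow_kronecker hσ₁ hσ₂, mul_kronecker_mul]
  simp only [perspective, hT, mpow_kronecker hσ₁ hσ₂, mul_kronecker_mul,
    mpow_kronecker (relQuotient_posSemidef hρ₁ σ₁) (relQuotient_posSemidef hρ₂ σ₂)]

theorem perspective_submatrix (α : ℝ) {ρ σ : Matrix n n ℂ} (hρ : ρ.PosSemidef)
    (hσ : σ.PosSemidef) (e : m ≃ n) :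
    perspective α (ρ.submatrix e e) (σ.submatrix e e) = (perspective α ρ σ).submatrix e e := by
  have hT : relQuotient (ρ.submatrix e e) (σ.submatrix e e) =
      (relQuotient ρ σ).submatrix e e := by
    simp only [relQuotient, mpow_submatrix hσ.1, submatrix_mul_equiv]
  simp only [perspective, hT, mpow_submatrix hσ.1, mpow_submatrix (relQuotient_posSemidef hρ σ).1,
    submatrix_mul_equiv]

theorem suppLE_submatrix_iff {n m : Type} [Fintype n] [Fintype m] {ρ σ : Matrix n n ℂ}
    (hσ : σ.PosSemidef) (e : m ≃ n) :
    SuppLE (ρ.submatrix e e) (σ.submatrix e e) ↔ SuppLE ρ σ := by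
  classical
  rw [suppLE_iff_mul_mpow_zero (hσ.submatrix e), suppLE_iff_mul_mpow_zero hσ,
    mpow_submatrix hσ.1, submatrix_mul_equiv]
  exact (reindex e.symm e.symm).injective.eq_iff (a := ρ * mpow σ 0) (b := ρ)

theorem SuppLE.kronecker {n m : Type} [Fintype n] [Fintype m] {ρ₁ σ₁ : Matrix n n ℂ}
    {ρ₂ σ₂ : Matrix m m ℂ} (hσ₁ : σ₁.PosSemidef) (hσ₂ : σ₂.PosSemidef) (h₁ : SuppLE ρ₁ σ₁)
    (h₂ : SuppLE ρ₂ σ₂) : SuppLE (ρ₁ ⊗ₖ ρ₂) (σ₁ ⊗ₖ σ₂) := by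
  classical
  rw [suppLE_iff_mul_mpow_zero (hσ₁.kronecker hσ₂), mpow_kronecker hσ₁ hσ₂, ← mul_kronecker_mul,
    (suppLE_iff_mul_mpow_zero hσ₁).1 h₁, (suppLE_iff_mul_mpow_zero hσ₂).1 h₂]

theorem kronecker_left_injective {R n m p q : Type*} [MulZeroClass R] [IsRightCancelMulZero R]
    {B : Matrix p q R} (hB : B ≠ 0) :
    Function.Injective fun A : Matrix n m R => A ⊗ₖ B := by
  obtain ⟨a, b, hab⟩ : ∃ a b, B a b ≠ 0 := by simpa [← Matrix.ext_iff] using hB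
  intro A A' h
  ext i j
  exact mul_right_cancel₀ hab (congrFun (congrFun h (i, a)) (j, b))

theorem kronecker_right_injective {R n m p q : Type*} [MulZeroClass R] [IsLeftCancelMulZero R]
    {A : Matrix n m R} (hA : A ≠ 0) :
    Function.Injective fun B : Matrix p q R => A ⊗ₖ B := by
  obtain ⟨a, b, hab⟩ : ∃ a b, A a b ≠ 0 := by simpa [← Matrix.ext_iff] using hA
  intro B B' h
  ext i j
  exact mul_left_cancel₀ hab (congrFun (congrFun h (a, i)) (b, j))

theorem suppLE_kronecker_iff {n m : Type} [Fintype n] [Fintype m] {ρ₁ σ₁ : Matrix n n ℂ}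
    {ρ₂ σ₂ : Matrix m m ℂ} (hσ₁ : σ₁.PosSemidef) (hσ₂ : σ₂.PosSemidef) (hρ₁ : ρ₁ ≠ 0)
    (hρ₂ : ρ₂ ≠ 0) : SuppLE (ρ₁ ⊗ₖ ρ₂) (σ₁ ⊗ₖ σ₂) ↔ SuppLE ρ₁ σ₁ ∧ SuppLE ρ₂ σ₂ := by
  classical
  refine ⟨fun h => ?_, fun h => h.1.kronecker hσ₁ hσ₂ h.2⟩
  rw [suppLE_iff_mul_mpow_zero (hσ₁.kronecker hσ₂), mpow_kronecker hσ₁ hσ₂,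
    ← mul_kronecker_mul] at h
  have hidem {p : Type} [Fintype p] [DecidableEq p] {ρ σ : Matrix p p ℂ} (hσ : σ.PosSemidef) :
      ρ * mpow σ 0 * mpow σ 0 = ρ * mpow σ 0 := by
    rw [Matrix.mul_assoc, mpow_mul_mpow hσ, add_zero]
  constructor
  · refine (suppLE_iff_mul_mpow_zero hσ₁).2 (kronecker_left_injective hρ₂ ?_)
    have h' := congrArg (· * (mpow σ₁ 0 ⊗ₖ (1 : Matrix m m ℂ))) h
    simp only [← mul_kronecker_mul, Matrix.mul_one, hidem hσ₁] at h'
    exact h'.symm.trans h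
  · refine (suppLE_iff_mul_mpow_zero hσ₂).2 (kronecker_right_injective hρ₁ ?_)
    have h' := congrArg (· * ((1 : Matrix n n ℂ) ⊗ₖ mpow σ₂ 0)) h
    simp only [← mul_kronecker_mul, Matrix.mul_one, hidem hσ₂] at h'
    exact h'.symm.trans h

theorem conj_mpow_half {m : Type*} (V : Matrix m n ℂ) {σ : Matrix n n ℂ} (hσ : σ.PosSemidef) :
    (V * mpow σ (1 / 2)) * (V * mpow σ (1 / 2))ᴴ = V * σ * Vᴴ := by
  rw [conjTranspose_mul, (mpow_isHermitian σ _).eq, Matrix.mul_assoc, ← Matrix.mul_assoc (mpow σ _),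
    mpow_half_mul_mpow_half hσ, ← Matrix.mul_assoc]

theorem conj_mpow_half_relQuotient {m : Type*} (V : Matrix m n ℂ) {ρ σ : Matrix n n ℂ}
    (hρ : ρ.IsHermitian) (hσ : σ.PosSemidef) (h : SuppLE ρ σ) :
    (V * mpow σ (1 / 2)) * relQuotient ρ σ * (V * mpow σ (1 / 2))ᴴ = V * ρ * Vᴴ := by
  conv_rhs => rw [← mpow_half_mul_relQuotient_mul_mpow_half hρ hσ h]
  simp only [conjTranspose_mul, (mpow_isHermitian σ _).eq, Matrix.mul_assoc]

theorem SuppLE.conj {n m : Type} [Fintype n] [Fintype m] {ρ σ : Matrix n n ℂ}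
    (hρ : ρ.IsHermitian) (hσ : σ.PosSemidef) (h : SuppLE ρ σ) (V : Matrix m n ℂ) :
    SuppLE (V * ρ * Vᴴ) (V * σ * Vᴴ) := by
  classical
  have hfix := congrArg conjTranspose
    (mpow_zero_mul_of_self_mul_conjTranspose (V * mpow σ (1 / 2)))
  rw [conjTranspose_mul (mpow _ _), (mpow_isHermitian _ _).eq] at hfix
  rw [suppLE_iff_mul_mpow_zero (hσ.mul_mul_conjTranspose_same V), ← conj_mpow_half V hσ,
    ← conj_mpow_half_relQuotient V hρ hσ h, Matrix.mul_assoc, hfix]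

/- The polar factor `W` of `V σ^{1/2}` intertwines the relative quotients, which reduces the
transformer inequality to `mpow_conj_le_conj_mpow`. -/
theorem perspective_conj_le {α : ℝ} (hα : 1 < α ∧ α ≤ 2) {ρ σ : Matrix n n ℂ}
    (hρ : ρ.PosSemidef) (hσ : σ.PosSemidef) (h : SuppLE ρ σ) (V : Matrix m n ℂ) :
    perspective α (V * ρ * Vᴴ) (V * σ * Vᴴ) ≤ V * perspective α ρ σ * Vᴴ := by
  set Y := V * mpow σ (1 / 2) with hYdef
  set T := relQuotient ρ σ with hTdef
  set W := polarFactor Y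
  have hT : relQuotient (V * ρ * Vᴴ) (V * σ * Vᴴ) = W * T * Wᴴ := by
    rw [relQuotient, ← conj_mpow_half_relQuotient V hρ.1 hσ h, ← conj_mpow_half V hσ]
    simp only [W, polarFactor, conjTranspose_mul _ Y, (mpow_isHermitian _ _).eq, Matrix.mul_assoc,
      ← hYdef, ← hTdef]
  have hY : mpow (V * σ * Vᴴ) (1 / 2) * W = Y := by
    rw [← conj_mpow_half V hσ, mpow_half_mul_polarFactor]
  calc perspective α (V * ρ * Vᴴ) (V * σ * Vᴴ)
      = mpow (V * σ * Vᴴ) (1 / 2) * mpow (W * T * Wᴴ) α * (mpow (V * σ * Vᴴ) (1 / 2))ᴴ := by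
        rw [perspective, hT, (mpow_isHermitian _ _).eq]
    _ ≤ mpow (V * σ * Vᴴ) (1 / 2) * (W * mpow T α * Wᴴ) * (mpow (V * σ * Vᴴ) (1 / 2))ᴴ :=
        conj_le_conj (mpow_conj_le_conj_mpow hα (relQuotient_posSemidef hρ σ)
          (polarFactor_conjTranspose_mul_self_le_one Y)) _
    _ = Y * mpow T α * Yᴴ := by
        rw [← hY, conjTranspose_mul]
        simp only [Matrix.mul_assoc]
    _ = V * perspective α ρ σ * Vᴴ := by
        simp only [hYdef, perspective, conjTranspose_mul, (mpow_isHermitian σ _).eq,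
          Matrix.mul_assoc, hTdef]

theorem conj_conj_of_mul_eq_one {R n m : Type*} [Semiring R] [StarRing R] [Fintype n]
    [DecidableEq n] [Fintype m] {U : Matrix n m R} {V : Matrix m n R} (hUV : U * V = 1)
    (A : Matrix n n R) :
    U * (V * A * Vᴴ) * Uᴴ = A := by
  rw [← Matrix.mul_assoc, ← Matrix.mul_assoc, hUV, Matrix.one_mul, Matrix.mul_assoc,
    ← conjTranspose_mul, hUV, conjTranspose_one, Matrix.mul_one]

theorem conj_perspective_le_of_mul_eq_one {α : ℝ} (hα : 1 < α ∧ α ≤ 2) {ρ σ : Matrix n n ℂ}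
    (hρ : ρ.PosSemidef) (hσ : σ.PosSemidef) {U V : Matrix n n ℂ} (hUV : U * V = 1)
    (h : SuppLE (V * ρ * Vᴴ) (V * σ * Vᴴ)) :
    V * perspective α ρ σ * Vᴴ ≤ perspective α (V * ρ * Vᴴ) (V * σ * Vᴴ) := by
  have hle := conj_le_conj (perspective_conj_le hα (hρ.mul_mul_conjTranspose_same V)
    (hσ.mul_mul_conjTranspose_same V) h U) V
  rwa [conj_conj_of_mul_eq_one hUV, conj_conj_of_mul_eq_one hUV,
    conj_conj_of_mul_eq_one (mul_eq_one_comm.1 hUV)] at hle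

theorem exists_conj_one_kronecker_eq_sum_conj {ι n m : Type*} [Fintype ι] [DecidableEq ι]
    [Fintype n] (V : ι → Matrix m n ℂ) :
    ∃ R : Matrix m (ι × n) ℂ, ∀ A : Matrix n n ℂ,
      R * ((1 : Matrix ι ι ℂ) ⊗ₖ A) * Rᴴ = ∑ r, V r * A * (V r)ᴴ := by
  refine ⟨Matrix.of fun i p => V p.1 i p.2, fun A => ?_⟩
  ext i j
  simp only [Matrix.mul_apply, Matrix.sum_apply, Fintype.sum_prod_type, kroneckerMap_apply,
    Matrix.one_apply, of_apply, conjTranspose_apply, ite_mul, one_mul, zero_mul, mul_ite, mul_zero,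
    Finset.sum_ite_irrel, Finset.sum_const_zero, Finset.sum_ite_eq', Finset.mem_univ, if_true]

theorem SuppLE.sum_conj {ι n m : Type} [Fintype ι] [Fintype n] [Fintype m] {ρ σ : Matrix n n ℂ}
    (hρ : ρ.PosSemidef) (hσ : σ.PosSemidef) (h : SuppLE ρ σ) (V : ι → Matrix m n ℂ) :
    SuppLE (∑ r, V r * ρ * (V r)ᴴ) (∑ r, V r * σ * (V r)ᴴ) := by
  classical
  obtain ⟨R, hR⟩ := exists_conj_one_kronecker_eq_sum_conj V
  rw [← hR, ← hR]
  exact SuppLE.conj (PosSemidef.one.kronecker hρ).1 (PosSemidef.one.kronecker hσ)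
    (SuppLE.kronecker PosSemidef.one hσ (fun _ hv => hv) h) R

theorem perspective_sum_conj_le {ι : Type} [Fintype ι] {α : ℝ} (hα : 1 < α ∧ α ≤ 2)
    {ρ σ : Matrix n n ℂ} (hρ : ρ.PosSemidef) (hσ : σ.PosSemidef) (h : SuppLE ρ σ)
    (V : ι → Matrix m n ℂ) :
    perspective α (∑ r, V r * ρ * (V r)ᴴ) (∑ r, V r * σ * (V r)ᴴ) ≤
      ∑ r, V r * perspective α ρ σ * (V r)ᴴ := by
  classical
  obtain ⟨R, hR⟩ := exists_conj_one_kronecker_eq_sum_conj V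
  have hone : (1 : Matrix ι ι ℂ) ⊗ₖ perspective α ρ σ = perspective α (1 ⊗ₖ ρ) (1 ⊗ₖ σ) := by
    rw [perspective_kronecker α PosSemidef.one PosSemidef.one hρ hσ, perspective_one_one]
  rw [← hR, ← hR, ← hR, hone]
  exact perspective_conj_le hα (PosSemidef.one.kronecker hρ) (PosSemidef.one.kronecker hσ)
    (SuppLE.kronecker PosSemidef.one hσ (fun _ hv => hv) h) R

theorem rtr_submatrix {n m : Type} [Fintype n] [Fintype m] (A : Matrix n n ℂ) (e : m ≃ n) :
    rtr (A.submatrix e e) = rtr A :=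
  congrArg Complex.re (e.sum_comp fun i => A i i)

open Classical in
theorem geomRenyi_eq_perspective (α : ℝ) (ρ : Matrix n n ℂ) {σ : Matrix n n ℂ}
    (hσ : σ.PosSemidef) : geomRenyi α ρ σ =
      if SuppLE ρ σ then (((α - 1)⁻¹ : ℝ) : EReal) * elog (rtr (perspective α ρ σ)) else ⊤ := by
  have htrace : rtr (σ * mpow (relQuotient ρ σ) α) = rtr (perspective α ρ σ) := by
    rw [rtr, rtr, perspective, trace_mul_cycle, mpow_half_mul_mpow_half hσ]
  rw [← htrace]
  rfl

theorem geomRenyi_submatrix (α : ℝ) {ρ σ : Matrix n n ℂ} (hρ : ρ.PosSemidef)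
    (hσ : σ.PosSemidef) (e : m ≃ n) :
    geomRenyi α (ρ.submatrix e e) (σ.submatrix e e) = geomRenyi α ρ σ := by
  classical
  simp only [geomRenyi_eq_perspective α _ hσ, geomRenyi_eq_perspective α _ (hσ.submatrix e),
    perspective_submatrix α hρ hσ, rtr_submatrix, suppLE_submatrix_iff hσ]

end Perspective

section Trace

variable {n m k : Type} [Fintype n] [DecidableEq n] [Fintype m] [DecidableEq m] [Fintype k]

theorem rtr_mono {n : Type} [Fintype n] {A B : Matrix n n ℂ} (h : A ≤ B) : rtr A ≤ rtr B := by
  have htrace := (le_iff.1 h).trace_nonneg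
  rw [trace_sub, sub_nonneg] at htrace
  exact Complex.re_le_re htrace

theorem rtr_sum {n ι : Type} [Fintype n] [Fintype ι] (A : ι → Matrix n n ℂ) :
    rtr (∑ r, A r) = ∑ r, rtr (A r) := by
  simp only [rtr, trace_sum, Complex.re_sum]

theorem rtr_real_smul {n : Type} [Fintype n] (c : ℝ) (A : Matrix n n ℂ) :
    rtr (c • A) = c * rtr A := by
  rw [rtr, trace_smul, Complex.smul_re, smul_eq_mul, rtr]

theorem rtr_mul_conjTranspose_mul_self_le {A : Matrix n n ℂ} (hA : A.IsHermitian)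
    (X : Matrix k n ℂ) : rtr (A * (Xᴴ * X)) ≤ ‖A‖ * rtr (Xᴴ * X) := by
  have hle : X * A * Xᴴ ≤ X * algebraMap ℝ (Matrix n n ℂ) ‖A‖ * Xᴴ :=
    conj_le_conj hA.isSelfAdjoint.le_algebraMap_norm_self X
  rw [Algebra.algebraMap_eq_smul_one, Matrix.mul_smul, Matrix.mul_one, Matrix.smul_mul] at hle
  have htrace := rtr_mono hle
  rw [rtr_real_smul] at htrace
  rwa [rtr, ← Matrix.mul_assoc, trace_mul_cycle, rtr, trace_mul_comm Xᴴ]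

theorem posSemidef_of_forall_posDef {n : Type} [Fintype n] {H : Matrix n n ℂ}
    (hH : H.IsHermitian) (h : ∀ ρ : Matrix n n ℂ, ρ.PosDef → 0 ≤ rtr (H * ρ)) :
    H.PosSemidef := by
  classical
  refine .of_dotProduct_mulVec_nonneg hH fun v => ?_
  have hre (ε : ℝ) (hε : 0 < ε) : 0 ≤ (star v ⬝ᵥ H *ᵥ v).re + ε * rtr H := by
    have hρ : (vecMulVec v (star v) + ε • (1 : Matrix n n ℂ)).PosDef :=
      (PosDef.one.smul hε).posSemidef_add (posSemidef_vecMulVec_self_star v)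
    have hpos := h _ hρ
    rwa [Matrix.mul_add, mul_vecMulVec, Matrix.mul_smul, Matrix.mul_one, rtr, trace_add,
      Complex.add_re, trace_vecMulVec, dotProduct_comm, ← rtr, rtr_real_smul] at hpos
  have hlim : Filter.Tendsto (fun ε : ℝ => (star v ⬝ᵥ H *ᵥ v).re + ε * rtr H)
      (nhdsWithin 0 (Set.Ioi 0)) (nhds (star v ⬝ᵥ H *ᵥ v).re) := by
    refine tendsto_nhdsWithin_of_tendsto_nhds (Continuous.tendsto' (by fun_prop) _ _ ?_)
    rw [zero_mul, add_zero]
  refine Complex.nonneg_iff.2 ⟨ge_of_tendsto hlim (eventually_mem_nhdsWithin.mono hre), ?_⟩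
  exact (hH.im_star_dotProduct_mulVec_self v).symm

theorem norm_le_of_forall_posDef {P : Matrix n n ℂ} (hP : P.PosSemidef) {L : ℝ} (hL : 0 ≤ L)
    (h : ∀ ρ : Matrix n n ℂ, ρ.PosDef → ρ.trace = 1 → rtr (P * ρ) ≤ L) : ‖P‖ ≤ L := by
  rw [CStarAlgebra.norm_le_iff_le_algebraMap P hL hP.nonneg, le_iff,
    Algebra.algebraMap_eq_smul_one]
  refine posSemidef_of_forall_posDef ((isHermitian_one.smul (.all L)).sub hP.1) fun ρ hρ => ?_
  rcases isEmpty_or_nonempty n with hn | hn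
  · rw [Subsingleton.elim ρ 0, Matrix.mul_zero, rtr, trace_zero, Complex.zero_re]
  have htrace : (rtr ρ : ℂ) = ρ.trace := Complex.conj_eq_iff_re.1 (by
    rw [starRingEnd_apply, ← trace_conjTranspose, hρ.1.eq])
  have hpos : 0 < rtr ρ := Complex.zero_lt_real.1 (htrace ▸ hρ.trace_pos)
  have hnormalized := h ((rtr ρ)⁻¹ • ρ) (hρ.smul (inv_pos.2 hpos)) (by
    rw [trace_smul, ← htrace, Complex.real_smul, ← Complex.ofReal_mul, inv_mul_cancel₀ hpos.ne',
      Complex.ofReal_one])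
  rw [Matrix.mul_smul, rtr_real_smul, inv_mul_le_iff₀ hpos] at hnormalized
  rw [Matrix.sub_mul, Matrix.smul_mul, Matrix.one_mul, rtr, trace_sub, Complex.sub_re, ← rtr, ← rtr,
    rtr_real_smul, sub_nonneg, mul_comm]
  exact hnormalized

theorem norm_mul_fst_snd {n m 𝕜 : Type*} [Fintype n] [Fintype m] [NormedField 𝕜] (a : n → 𝕜)
    (b : m → 𝕜) : ‖fun p : n × m => a p.1 * b p.2‖ = ‖a‖ * ‖b‖ := by
  refine le_antisymm ((pi_norm_le_iff_of_nonneg (by positivity)).2 fun p => ?_) ?_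
  · rw [norm_mul]
    exact mul_le_mul (norm_le_pi_norm a p.1) (norm_le_pi_norm b p.2) (norm_nonneg _)
      (norm_nonneg _)
  · have hfst (j : m) : ‖b j‖ * ‖a‖ ≤ ‖fun p : n × m => a p.1 * b p.2‖ := by
      rw [← norm_smul]
      refine (pi_norm_le_iff_of_nonneg (norm_nonneg _)).2 fun i => ?_
      rw [Pi.smul_apply, smul_eq_mul, mul_comm]
      exact norm_le_pi_norm (fun p : n × m => a p.1 * b p.2) (i, j)
    rcases (norm_nonneg a).eq_or_lt with ha | ha
    · rw [← ha, zero_mul]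
      exact norm_nonneg _
    · rw [mul_comm, ← le_div_iff₀ ha]
      exact (pi_norm_le_iff_of_nonneg (by positivity)).2 fun j => (le_div_iff₀ ha).2 (hfst j)

theorem norm_unitary_conj {𝕜 n : Type*} [RCLike 𝕜] [Fintype n] [DecidableEq n]
    {U : Matrix n n 𝕜} (hU : Uᴴ * U = 1) (hU' : U * Uᴴ = 1) (A : Matrix n n 𝕜) :
    ‖U * A * Uᴴ‖ = ‖A‖ := by
  have hmem : U ∈ unitary (Matrix n n 𝕜) := Unitary.mem_iff.2 ⟨hU, hU'⟩
  exact (CStarRing.norm_mul_mem_unitary _ (Unitary.star_mem hmem)).trans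
    (CStarRing.norm_mem_unitary_mul _ hmem)

theorem norm_kronecker_of_posSemidef {A : Matrix n n ℂ} {B : Matrix m m ℂ} (hA : A.PosSemidef)
    (hB : B.PosSemidef) : ‖A ⊗ₖ B‖ = ‖A‖ * ‖B‖ := by
  obtain ⟨U, a, hU, hU', -, rfl⟩ := exists_unitary_diagonal hA
  obtain ⟨V, b, hV, hV', -, rfl⟩ := exists_unitary_diagonal hB
  rw [conj_diagonal_kronecker_conj_diagonal,
    norm_unitary_conj (conjTranspose_kronecker_mul_kronecker_eq_one hU hV)
      (kronecker_mul_conjTranspose_kronecker_eq_one hU' hV'),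
    norm_unitary_conj hU hU', norm_unitary_conj hV hV', l2_opNorm_diagonal, l2_opNorm_diagonal,
    l2_opNorm_diagonal]
  simp only [Complex.ofReal_mul, norm_mul_fst_snd (fun i => (a i : ℂ)) fun j => (b j : ℂ)]

theorem norm_kronecker {n' m' : Type} [Fintype n'] [Fintype m'] (A : Matrix n' n ℂ)
    (B : Matrix m' m ℂ) : ‖A ⊗ₖ B‖ = ‖A‖ * ‖B‖ := by
  classical
  refine (mul_self_inj (norm_nonneg _) (by positivity)).1 ?_
  rw [← l2_opNorm_conjTranspose_mul_self, conjTranspose_kronecker, ← mul_kronecker_mul,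
    norm_kronecker_of_posSemidef (posSemidef_conjTranspose_mul_self A)
      (posSemidef_conjTranspose_mul_self B), l2_opNorm_conjTranspose_mul_self,
    l2_opNorm_conjTranspose_mul_self, mul_mul_mul_comm]

end Trace

section Choi

variable {n m k : Type}

/-- Complete positivity: every ampliation `id_k ⊗ Φ` preserves positive semidefiniteness. -/
def IsCompletelyPositive (Φ : Matrix n n ℂ →ₗ[ℂ] Matrix m m ℂ) : Prop :=
  ∀ k : ℕ, 1 ≤ k → ∀ M : Matrix (Fin k × n) (Fin k × n) ℂ, M.PosSemidef →
    (blockApply Φ M).PosSemidef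

/-- The Choi matrix `∑ᵢⱼ |i⟩⟨j| ⊗ Φ(|i⟩⟨j|)`. -/
def choi [DecidableEq n] (Φ : Matrix n n ℂ →ₗ[ℂ] Matrix m m ℂ) : Matrix (n × m) (n × m) ℂ :=
  Matrix.of fun p q => Φ (single p.1 q.1 1) p.2 q.2

/-- The partial trace over the second tensor factor. -/
def partialTrace [Fintype m] (P : Matrix (n × m) (n × m) ℂ) : Matrix n n ℂ :=
  ∑ a, P.submatrix (fun i => (i, a)) fun i => (i, a)

/-- The rank one operator `|x⟩⟨x|`, where `x ∈ ℂᵏ ⊗ ℂⁿ` is the vectorisation of `X`. -/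
def vecProjector (X : Matrix k n ℂ) : Matrix (k × n) (k × n) ℂ :=
  vecMulVec (fun p => X p.1 p.2) (star fun p => X p.1 p.2)

theorem vecProjector_posSemidef [Finite n] [Finite k] (X : Matrix k n ℂ) :
    (vecProjector X).PosSemidef :=
  posSemidef_vecMulVec_self_star _

theorem blockApply_vecProjector [Fintype n] [DecidableEq n] [Fintype m] [DecidableEq m]
    (Φ : Matrix n n ℂ →ₗ[ℂ] Matrix m m ℂ) (X : Matrix k n ℂ) :
    blockApply Φ (vecProjector X) =
      (X ⊗ₖ (1 : Matrix m m ℂ)) * choi Φ * (X ⊗ₖ (1 : Matrix m m ℂ))ᴴ := by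
  ext p q
  have hblock : (Matrix.of fun a b => vecProjector X (p.1, a) (q.1, b)) =
      ∑ a, ∑ b, (X p.1 a * star (X q.1 b)) • single a b (1 : ℂ) := by
    rw [matrix_eq_sum_single (Matrix.of _)]
    simp only [smul_single, smul_eq_mul, mul_one]
    rfl
  rw [blockApply, of_apply, hblock]
  simp only [map_sum, map_smul, Matrix.sum_apply, Matrix.smul_apply, smul_eq_mul, Matrix.mul_apply,
    Fintype.sum_prod_type, kroneckerMap_apply, Matrix.one_apply, choi, of_apply,
    conjTranspose_apply, mul_ite, mul_one, mul_zero, ite_mul, zero_mul, Finset.sum_ite_eq,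
    Finset.mem_univ, if_true, apply_ite star, star_zero]
  rw [Finset.sum_comm]
  refine Finset.sum_congr rfl fun b _ => ?_
  rw [Finset.sum_mul]
  exact Finset.sum_congr rfl fun a _ => by ring

theorem exists_eq_sum_vecProjector [Fintype n] [Fintype k] {ν : Matrix (k × n) (k × n) ℂ}
    (hν : ν.PosSemidef) : ∃ X : k × n → Matrix k n ℂ, ν = ∑ r, vecProjector (X r) := by
  classical
  obtain ⟨B, hB⟩ := CStarAlgebra.nonneg_iff_eq_star_mul_self.1 hν.nonneg
  refine ⟨fun r => Matrix.of fun i j => star (B r (i, j)), ?_⟩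
  ext p q
  simp only [hB, star_eq_conjTranspose, Matrix.mul_apply, conjTranspose_apply, Matrix.sum_apply,
    vecProjector, vecMulVec_apply, of_apply, Pi.star_apply, star_star]

theorem trace_vecProjector [Fintype n] [Fintype k] (X : Matrix k n ℂ) :
    (vecProjector X).trace = (Xᴴ * X).trace := by
  simp only [Matrix.trace, diag_apply, vecProjector, vecMulVec_apply, Pi.star_apply,
    Fintype.sum_prod_type, Matrix.mul_apply, conjTranspose_apply]
  rw [Finset.sum_comm]
  simp only [mul_comm]

theorem trace_mul_kronecker_one [Fintype n] [Fintype m] [DecidableEq m]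
    (P : Matrix (n × m) (n × m) ℂ) (Y : Matrix n n ℂ) :
    (P * (Y ⊗ₖ (1 : Matrix m m ℂ))).trace = (partialTrace P * Y).trace := by
  simp only [Matrix.trace, diag_apply, partialTrace, Matrix.mul_apply, Matrix.sum_apply,
    submatrix_apply, Fintype.sum_prod_type, kroneckerMap_apply, Matrix.one_apply,
    mul_ite, mul_one, mul_zero, Finset.sum_ite_eq', Finset.mem_univ, if_true, Finset.sum_mul]

theorem trace_partialTrace [Fintype n] [Fintype m] (P : Matrix (n × m) (n × m) ℂ) :
    (partialTrace P).trace = P.trace := by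
  classical
  simpa only [one_kronecker_one, Matrix.mul_one] using (trace_mul_kronecker_one P 1).symm

theorem partialTrace_posSemidef [Fintype m] {P : Matrix (n × m) (n × m) ℂ} (hP : P.PosSemidef) :
    (partialTrace P).PosSemidef :=
  posSemidef_sum _ fun _ _ => hP.submatrix _

theorem eq_zero_of_partialTrace_eq_zero [Finite n] [Fintype m] {P : Matrix (n × m) (n × m) ℂ}
    (hP : P.PosSemidef) (h : partialTrace P = 0) : P = 0 := by
  cases nonempty_fintype n
  rw [← hP.trace_eq_zero_iff, ← trace_partialTrace, h, trace_zero]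

theorem rtr_conj_kronecker_one [Fintype n] [Fintype m] [DecidableEq m] [Fintype k]
    (P : Matrix (n × m) (n × m) ℂ) (X : Matrix k n ℂ) :
    rtr ((X ⊗ₖ (1 : Matrix m m ℂ)) * P * (X ⊗ₖ (1 : Matrix m m ℂ))ᴴ) =
      rtr (partialTrace P * (Xᴴ * X)) := by
  rw [rtr, rtr, ← trace_mul_kronecker_one, trace_mul_cycle, trace_mul_comm,
    conjTranspose_kronecker, ← mul_kronecker_mul, conjTranspose_one, Matrix.one_mul]

theorem blockApply_sum_vecProjector {ι : Type*} [Fintype ι] [Fintype n] [DecidableEq n]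
    [Fintype m] [DecidableEq m] (Φ : Matrix n n ℂ →ₗ[ℂ] Matrix m m ℂ) (X : ι → Matrix k n ℂ) :
    blockApply Φ (∑ r, vecProjector (X r)) =
      ∑ r, (X r ⊗ₖ (1 : Matrix m m ℂ)) * choi Φ * (X r ⊗ₖ (1 : Matrix m m ℂ))ᴴ := by
  simp only [← blockApply_vecProjector]
  exact map_sum (blockApplyL k Φ) _ _

theorem blockApply_submatrix {l : Type} (Φ : Matrix n n ℂ →ₗ[ℂ] Matrix m m ℂ)
    (M : Matrix (k × n) (k × n) ℂ) (e : l ≃ k) :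
    blockApply Φ (M.submatrix (e.prodCongr (.refl n)) (e.prodCongr (.refl n))) =
      (blockApply Φ M).submatrix (e.prodCongr (.refl m)) (e.prodCongr (.refl m)) :=
  rfl

theorem IsCompletelyPositive.posSemidef_blockApply [Finite k]
    {Φ : Matrix n n ℂ →ₗ[ℂ] Matrix m m ℂ} (hΦ : IsCompletelyPositive Φ)
    {M : Matrix (k × n) (k × n) ℂ} (hM : M.PosSemidef) : (blockApply Φ M).PosSemidef := by
  cases nonempty_fintype k
  rcases isEmpty_or_nonempty k with hk | hk
  · rw [Subsingleton.elim (blockApply Φ M) 0]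
    exact .zero
  have h := hΦ (Fintype.card k) Fintype.card_pos _
    (hM.submatrix ((Fintype.equivFin k).symm.prodCongr (.refl n)))
  rwa [blockApply_submatrix, posSemidef_submatrix_equiv] at h

theorem isCompletelyPositive_iff_choi_posSemidef [Finite n] [DecidableEq n] [Finite m]
    {Φ : Matrix n n ℂ →ₗ[ℂ] Matrix m m ℂ} :
    IsCompletelyPositive Φ ↔ (choi Φ).PosSemidef := by
  classical
  cases nonempty_fintype n
  cases nonempty_fintype m
  refine ⟨fun hΦ => ?_, fun hΦ k _ M hM => ?_⟩
  · have h := hΦ.posSemidef_blockApply (vecProjector_posSemidef (1 : Matrix n n ℂ))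
    rwa [blockApply_vecProjector, one_kronecker_one, Matrix.one_mul, conjTranspose_one,
      Matrix.mul_one] at h
  · obtain ⟨X, rfl⟩ := exists_eq_sum_vecProjector hM
    rw [blockApply_sum_vecProjector]
    exact posSemidef_sum _ fun r _ => hΦ.mul_mul_conjTranspose_same _

end Choi

section ClosedFormula

variable {n m k : Type} [Fintype n] [DecidableEq n] [Fintype m] [DecidableEq m]

theorem inv_mul_elog_le_coe_iff {a : ℝ} (ha : 0 < a) (t z : ℝ) :
    ((a⁻¹ : ℝ) : EReal) * elog t ≤ z ↔ t ≤ 2 ^ (a * z) := by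
  rcases le_or_gt t 0 with ht | ht
  · rw [elog, if_pos ht, EReal.coe_mul_bot_of_pos (inv_pos.2 ha)]
    exact iff_of_true bot_le (ht.trans (by positivity))
  · rw [elog, if_neg ht.not_ge, ← EReal.coe_mul, EReal.coe_le_coe_iff, inv_mul_le_iff₀ ha,
      Real.logb_le_iff_le_rpow one_lt_two ht]

theorem ite_inv_mul_elog_le_coe_iff {a : ℝ} (ha : 0 < a) (p : Prop) [Decidable p] (t z : ℝ) :
    (if p then ((a⁻¹ : ℝ) : EReal) * elog t else ⊤) ≤ z ↔ p ∧ t ≤ 2 ^ (a * z) := by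
  split_ifs with h
  · rw [inv_mul_elog_le_coe_iff ha, and_iff_right h]
  · exact iff_of_false (EReal.coe_lt_top z).not_ge fun hp => h hp.1

theorem geomRenyi_le_coe_iff {α : ℝ} (hα : 1 < α) (ρ : Matrix n n ℂ) {σ : Matrix n n ℂ}
    (hσ : σ.PosSemidef) (z : ℝ) : geomRenyi α ρ σ ≤ (z : EReal) ↔
      SuppLE ρ σ ∧ rtr (perspective α ρ σ) ≤ 2 ^ ((α - 1) * z) := by
  rw [geomRenyi_eq_perspective α ρ hσ, ite_inv_mul_elog_le_coe_iff (sub_pos.2 hα)]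

open Classical in
/-- The closed formula for the geometric Rényi divergence of two channels in terms of their Choi
matrices `C` and `D`. -/
def geomRenyiChoi (α : ℝ) (C D : Matrix (n × m) (n × m) ℂ) : EReal :=
  if SuppLE C D then (((α - 1)⁻¹ : ℝ) : EReal) * elog ‖partialTrace (perspective α C D)‖ else ⊤

theorem geomRenyiChoi_le_coe_iff {α : ℝ} (hα : 1 < α) (C D : Matrix (n × m) (n × m) ℂ) (z : ℝ) :
    geomRenyiChoi α C D ≤ (z : EReal) ↔
      SuppLE C D ∧ ‖partialTrace (perspective α C D)‖ ≤ 2 ^ ((α - 1) * z) := by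
  rw [geomRenyiChoi, ite_inv_mul_elog_le_coe_iff (sub_pos.2 hα)]

variable {E F : Matrix n n ℂ →ₗ[ℂ] Matrix m m ℂ}

theorem geomRenyi_blockApply_le_chDiv {n : Type} [Fintype n]
    {E F : Matrix n n ℂ →ₗ[ℂ] Matrix m m ℂ} (α : ℝ) [Fintype k] [DecidableEq k]
    (hE : IsCompletelyPositive E) (hF : IsCompletelyPositive F) {ν : Matrix (k × n) (k × n) ℂ}
    (hν : IsState ν) : geomRenyi α (blockApply E ν) (blockApply F ν) ≤ chDiv (geomD α) E F := by
  have hk : Nonempty k := by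
    by_contra hk
    rw [not_nonempty_iff] at hk
    simpa using hν.2
  let e := (Fintype.equivFin k).symm
  have hν' : IsState (ν.submatrix (e.prodCongr (.refl n)) (e.prodCongr (.refl n))) :=
    ⟨hν.1.submatrix _, ((e.prodCongr (.refl n)).sum_comp fun p => ν p p).trans hν.2⟩
  rw [← geomRenyi_submatrix α (hE.posSemidef_blockApply hν.1) (hF.posSemidef_blockApply hν.1)
    (e.prodCongr (.refl m)), ← blockApply_submatrix, ← blockApply_submatrix]
  exact le_iSup₂_of_le (Fintype.card k) Fintype.card_pos (le_iSup₂_of_le _ hν' le_rfl)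

theorem suppLE_blockApply {m : Type} [Fintype m] [Fintype k]
    {E F : Matrix n n ℂ →ₗ[ℂ] Matrix m m ℂ} (hE : IsCompletelyPositive E)
    (hF : IsCompletelyPositive F) (h : SuppLE (choi E) (choi F))
    {ν : Matrix (k × n) (k × n) ℂ} (hν : ν.PosSemidef) :
    SuppLE (blockApply E ν) (blockApply F ν) := by
  classical
  obtain ⟨X, rfl⟩ := exists_eq_sum_vecProjector hν
  rw [blockApply_sum_vecProjector, blockApply_sum_vecProjector]
  exact SuppLE.sum_conj (isCompletelyPositive_iff_choi_posSemidef.1 hE)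
    (isCompletelyPositive_iff_choi_posSemidef.1 hF) h _

theorem rtr_perspective_blockApply_le {α : ℝ} (hα : 1 < α ∧ α ≤ 2) [Fintype k] [DecidableEq k]
    (hE : IsCompletelyPositive E) (hF : IsCompletelyPositive F) (h : SuppLE (choi E) (choi F))
    {ν : Matrix (k × n) (k × n) ℂ} (hν : IsState ν) :
    rtr (perspective α (blockApply E ν) (blockApply F ν)) ≤
      ‖partialTrace (perspective α (choi E) (choi F))‖ := by
  have hC := isCompletelyPositive_iff_choi_posSemidef.1 hE
  have hD := isCompletelyPositive_iff_choi_posSemidef.1 hF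
  set P := perspective α (choi E) (choi F)
  have hP : P.PosSemidef := perspective_posSemidef α hC _
  obtain ⟨X, rfl⟩ := exists_eq_sum_vecProjector hν.1
  have htrace : ∑ r, rtr ((X r)ᴴ * X r) = 1 := by
    simpa only [rtr, ← trace_vecProjector, ← Complex.re_sum, ← trace_sum, hν.2]
      using Complex.one_re
  calc rtr (perspective α (blockApply E _) (blockApply F _))
      ≤ rtr (∑ r, (X r ⊗ₖ (1 : Matrix m m ℂ)) * P * (X r ⊗ₖ (1 : Matrix m m ℂ))ᴴ) := by
        rw [blockApply_sum_vecProjector, blockApply_sum_vecProjector]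
        exact rtr_mono (perspective_sum_conj_le hα hC hD h _)
    _ = ∑ r, rtr (partialTrace P * ((X r)ᴴ * X r)) := by
        simp only [rtr_sum, rtr_conj_kronecker_one]
    _ ≤ ∑ r, ‖partialTrace P‖ * rtr ((X r)ᴴ * X r) :=
        Finset.sum_le_sum fun r _ =>
          rtr_mul_conjTranspose_mul_self_le (partialTrace_posSemidef hP).1 (X r)
    _ = ‖partialTrace P‖ := by rw [← Finset.mul_sum, htrace, mul_one]

theorem suppLE_choi_of_blockApply_vecProjector {m : Type} [Fintype m]
    {E F : Matrix n n ℂ →ₗ[ℂ] Matrix m m ℂ} (hE : IsCompletelyPositive E)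
    (hF : IsCompletelyPositive F) {U X : Matrix n n ℂ} (hUX : U * X = 1)
    (h : SuppLE (blockApply E (vecProjector X)) (blockApply F (vecProjector X))) :
    SuppLE (choi E) (choi F) := by
  classical
  have hinv : (U ⊗ₖ (1 : Matrix m m ℂ)) * (X ⊗ₖ (1 : Matrix m m ℂ)) = 1 := by
    rw [← mul_kronecker_mul, hUX, Matrix.one_mul, one_kronecker_one]
  have hconj := SuppLE.conj (hE.posSemidef_blockApply (vecProjector_posSemidef X)).1
    (hF.posSemidef_blockApply (vecProjector_posSemidef X)) h (U ⊗ₖ (1 : Matrix m m ℂ))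
  rwa [blockApply_vecProjector, blockApply_vecProjector, conj_conj_of_mul_eq_one hinv,
    conj_conj_of_mul_eq_one hinv] at hconj

theorem rtr_partialTrace_perspective_choi_mul_le {α : ℝ} (hα : 1 < α ∧ α ≤ 2)
    (hE : IsCompletelyPositive E) (hF : IsCompletelyPositive F) {U X : Matrix n n ℂ}
    (hUX : U * X = 1)
    (h : SuppLE (blockApply E (vecProjector X)) (blockApply F (vecProjector X))) :
    rtr (partialTrace (perspective α (choi E) (choi F)) * (Xᴴ * X)) ≤
      rtr (perspective α (blockApply E (vecProjector X)) (blockApply F (vecProjector X))) := by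
  have hinv : (U ⊗ₖ (1 : Matrix m m ℂ)) * (X ⊗ₖ (1 : Matrix m m ℂ)) = 1 := by
    rw [← mul_kronecker_mul, hUX, Matrix.one_mul, one_kronecker_one]
  rw [blockApply_vecProjector, blockApply_vecProjector] at h ⊢
  rw [← rtr_conj_kronecker_one]
  exact rtr_mono (conj_perspective_le_of_mul_eq_one hα
    (isCompletelyPositive_iff_choi_posSemidef.1 hE)
    (isCompletelyPositive_iff_choi_posSemidef.1 hF) hinv h)

theorem exists_left_inverse_conjTranspose_mul_self_eq {ρ : Matrix n n ℂ} (hρ : ρ.PosDef) :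
    ∃ U X : Matrix n n ℂ, U * X = 1 ∧ Xᴴ * X = ρ := by
  obtain ⟨X, hX⟩ := CStarAlgebra.nonneg_iff_eq_star_mul_self.1 hρ.posSemidef.nonneg
  rw [star_eq_conjTranspose] at hX
  refine ⟨ρ⁻¹ * Xᴴ, X, ?_, hX.symm⟩
  rw [Matrix.mul_assoc, ← hX, nonsing_inv_mul ρ ((isUnit_iff_isUnit_det ρ).1 hρ.isUnit)]

theorem exists_posDef_trace_eq_one {n : Type*} [Fintype n] [Nonempty n] :
    ∃ ρ : Matrix n n ℂ, ρ.PosDef ∧ ρ.trace = 1 := by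
  classical
  have hcard : (0 : ℝ) < Fintype.card n := Nat.cast_pos.2 Fintype.card_pos
  refine ⟨(Fintype.card n : ℝ)⁻¹ • 1, PosDef.one.smul (inv_pos.2 hcard), ?_⟩
  rw [trace_smul, trace_one, Complex.real_smul, Complex.ofReal_inv, Complex.ofReal_natCast,
    inv_mul_cancel₀ (Nat.cast_ne_zero.2 Fintype.card_ne_zero)]

theorem chDiv_geomD_le_coe_iff {α : ℝ} (hα : 1 < α ∧ α ≤ 2) (hE : IsCompletelyPositive E)
    (hF : IsCompletelyPositive F) (z : ℝ) :
    chDiv (geomD α) E F ≤ z ↔ geomRenyiChoi α (choi E) (choi F) ≤ z := by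
  rw [geomRenyiChoi_le_coe_iff hα.1]
  constructor
  · intro hz
    have hinput {ρ : Matrix n n ℂ} (hρ : ρ.PosDef) (htrace : ρ.trace = 1) :
        SuppLE (choi E) (choi F) ∧
          rtr (partialTrace (perspective α (choi E) (choi F)) * ρ) ≤ 2 ^ ((α - 1) * z) := by
      obtain ⟨U, X, hUX, rfl⟩ := exists_left_inverse_conjTranspose_mul_self_eq hρ
      have hν : IsState (vecProjector X) :=
        ⟨vecProjector_posSemidef X, (trace_vecProjector X).trans htrace⟩
      obtain ⟨hsupp, hle⟩ := (geomRenyi_le_coe_iff hα.1 _ (hF.posSemidef_blockApply hν.1) z).1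
        ((geomRenyi_blockApply_le_chDiv α hE hF hν).trans hz)
      exact ⟨suppLE_choi_of_blockApply_vecProjector hE hF hUX hsupp,
        (rtr_partialTrace_perspective_choi_mul_le hα hE hF hUX hsupp).trans hle⟩
    refine ⟨?_, norm_le_of_forall_posDef (partialTrace_posSemidef (perspective_posSemidef α
      (isCompletelyPositive_iff_choi_posSemidef.1 hE) _)) (by positivity)
      fun ρ hρ htrace => (hinput hρ htrace).2⟩
    rcases isEmpty_or_nonempty n with hn | hn
    · exact fun _ _ => Subsingleton.elim _ _
    · obtain ⟨ρ, hρ, htrace⟩ := exists_posDef_trace_eq_one (n := n)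
      exact (hinput hρ htrace).1
  · rintro ⟨hsupp, hle⟩
    refine iSup₂_le fun k _ => iSup₂_le fun ν hν => ?_
    exact (geomRenyi_le_coe_iff hα.1 _ (hF.posSemidef_blockApply hν.1) z).2
      ⟨suppLE_blockApply hE hF hsupp hν.1,
        (rtr_perspective_blockApply_le hα hE hF hsupp hν).trans hle⟩

theorem chDiv_geomD_eq_geomRenyiChoi {α : ℝ} (hα : 1 < α ∧ α ≤ 2)
    (hE : IsCompletelyPositive E) (hF : IsCompletelyPositive F) :
    chDiv (geomD α) E F = geomRenyiChoi α (choi E) (choi F) :=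
  le_antisymm
    (EReal.le_of_forall_lt_iff_le.1 fun z hz =>
      (chDiv_geomD_le_coe_iff hα hE hF z).2 hz.le)
    (EReal.le_of_forall_lt_iff_le.1 fun z hz =>
      (chDiv_geomD_le_coe_iff hα hE hF z).1 hz.le)

end ClosedFormula

section Additivity

variable {n₁ m₁ n₂ m₂ : Type} [Fintype n₁] [DecidableEq n₁] [Fintype m₁] [DecidableEq m₁]
  [Fintype n₂] [DecidableEq n₂] [Fintype m₂] [DecidableEq m₂]

theorem elog_mul {x y : ℝ} (hx : 0 ≤ x) (hy : 0 ≤ y) : elog (x * y) = elog x + elog y := by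
  rcases hx.eq_or_lt with rfl | hx
  · rw [zero_mul, elog, if_pos le_rfl, EReal.bot_add]
  rcases hy.eq_or_lt with rfl | hy
  · rw [mul_zero, elog.eq_def 0, if_pos le_rfl, EReal.add_bot]
  rw [elog, elog, elog, if_neg hx.not_ge, if_neg hy.not_ge, if_neg (mul_pos hx hy).not_ge,
    Real.logb_mul hx.ne' hy.ne', EReal.coe_add]

theorem zero_geomRenyiChoi {n m : Type} [Fintype n] [DecidableEq n] [Fintype m] [DecidableEq m]
    {α : ℝ} (hα : 1 < α) (D : Matrix (n × m) (n × m) ℂ) : geomRenyiChoi α 0 D = ⊥ := by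
  have hP : partialTrace (perspective α 0 D) = 0 := by
    rw [zero_perspective]
    exact Finset.sum_eq_zero fun _ _ => rfl
  have hsupp : SuppLE 0 D := fun v _ => zero_mulVec v
  rw [geomRenyiChoi, if_pos hsupp, hP, norm_zero, elog, if_pos le_rfl,
    EReal.coe_mul_bot_of_pos (inv_pos.2 (sub_pos.2 hα))]

theorem geomRenyiChoi_ne_bot {n m : Type} [Fintype n] [DecidableEq n] [Fintype m] [DecidableEq m]
    (α : ℝ) {C D : Matrix (n × m) (n × m) ℂ} (hC : C.PosSemidef) (hD : D.PosSemidef)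
    (hC0 : C ≠ 0) : geomRenyiChoi α C D ≠ ⊥ := by
  rw [geomRenyiChoi]
  split_ifs with h
  · have hpos : 0 < ‖partialTrace (perspective α C D)‖ := norm_pos_iff.2 fun h0 =>
      hC0 (eq_zero_of_perspective_eq_zero hC hD h
        (eq_zero_of_partialTrace_eq_zero (perspective_posSemidef α hC D) h0))
    rw [elog, if_neg hpos.not_ge, ← EReal.coe_mul]
    exact EReal.coe_ne_bot _
  · exact top_ne_bot

theorem partialTrace_kronecker {n₁ m₁ n₂ m₂ : Type} [Fintype m₁] [Fintype m₂]
    (P₁ : Matrix (n₁ × m₁) (n₁ × m₁) ℂ) (P₂ : Matrix (n₂ × m₂) (n₂ × m₂) ℂ) :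
    partialTrace ((P₁ ⊗ₖ P₂).submatrix (Equiv.prodProdProdComm n₁ n₂ m₁ m₂)
      (Equiv.prodProdProdComm n₁ n₂ m₁ m₂)) = partialTrace P₁ ⊗ₖ partialTrace P₂ := by
  ext p q
  simp only [partialTrace, Matrix.sum_apply, submatrix_apply, kroneckerMap_apply,
    Equiv.prodProdProdComm_apply, Fintype.sum_prod_type, Finset.sum_mul_sum]

theorem geomRenyiChoi_kronecker {α : ℝ} (hα : 1 < α) {C₁ D₁ : Matrix (n₁ × m₁) (n₁ × m₁) ℂ}
    {C₂ D₂ : Matrix (n₂ × m₂) (n₂ × m₂) ℂ} (hC₁ : C₁.PosSemidef) (hD₁ : D₁.PosSemidef)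
    (hC₂ : C₂.PosSemidef) (hD₂ : D₂.PosSemidef) :
    geomRenyiChoi α
        ((C₁ ⊗ₖ C₂).submatrix (Equiv.prodProdProdComm n₁ n₂ m₁ m₂)
          (Equiv.prodProdProdComm n₁ n₂ m₁ m₂))
        ((D₁ ⊗ₖ D₂).submatrix (Equiv.prodProdProdComm n₁ n₂ m₁ m₂)
          (Equiv.prodProdProdComm n₁ n₂ m₁ m₂)) =
      geomRenyiChoi α C₁ D₁ + geomRenyiChoi α C₂ D₂ := by
  rcases eq_or_ne C₁ 0 with rfl | hC₁0
  · rw [zero_kronecker, submatrix_zero, Pi.zero_apply, Pi.zero_apply, zero_geomRenyiChoi hα,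
      zero_geomRenyiChoi hα, EReal.bot_add]
  rcases eq_or_ne C₂ 0 with rfl | hC₂0
  · rw [kronecker_zero, submatrix_zero, Pi.zero_apply, Pi.zero_apply, zero_geomRenyiChoi hα,
      zero_geomRenyiChoi hα, EReal.add_bot]
  have hsupp := (suppLE_submatrix_iff (hD₁.kronecker hD₂)
    (Equiv.prodProdProdComm n₁ n₂ m₁ m₂)).trans (suppLE_kronecker_iff hD₁ hD₂ hC₁0 hC₂0)
  by_cases h₁ : SuppLE C₁ D₁
  · by_cases h₂ : SuppLE C₂ D₂
    · rw [geomRenyiChoi, if_pos (hsupp.2 ⟨h₁, h₂⟩), geomRenyiChoi, if_pos h₁, geomRenyiChoi,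
        if_pos h₂, perspective_submatrix α (hC₁.kronecker hC₂) (hD₁.kronecker hD₂),
        perspective_kronecker α hC₁ hD₁ hC₂ hD₂, partialTrace_kronecker, norm_kronecker,
        elog_mul (norm_nonneg _) (norm_nonneg _), EReal.left_distrib_of_nonneg_of_ne_top
          (EReal.coe_nonneg.2 (inv_nonneg.2 (sub_nonneg.2 hα.le))) (EReal.coe_ne_top _)]
    · rw [geomRenyiChoi, if_neg fun h => h₂ (hsupp.1 h).2, geomRenyiChoi.eq_def α C₂, if_neg h₂,
        EReal.add_top_of_ne_bot (geomRenyiChoi_ne_bot α hC₁ hD₁ hC₁0)]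
  · rw [geomRenyiChoi, if_neg fun h => h₁ (hsupp.1 h).1, geomRenyiChoi.eq_def α C₁, if_neg h₁,
      EReal.top_add_of_ne_bot (geomRenyiChoi_ne_bot α hC₂ hD₂ hC₂0)]

theorem tensorChannel_kronecker {n₁ m₁ n₂ m₂ : Type}
    (E₁ : Matrix n₁ n₁ ℂ →ₗ[ℂ] Matrix m₁ m₁ ℂ) (E₂ : Matrix n₂ n₂ ℂ →ₗ[ℂ] Matrix m₂ m₂ ℂ)
    (A : Matrix n₁ n₁ ℂ) (B : Matrix n₂ n₂ ℂ) :
    tensorChannel E₁ E₂ (A ⊗ₖ B) = E₁ A ⊗ₖ E₂ B := by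
  have hright : blockApply E₂ (A ⊗ₖ B) = A ⊗ₖ E₂ B := by
    ext p q
    exact congrFun (congrFun (map_smul E₂ (A p.1 q.1) B) p.2) q.2
  have hleft : blockApplyRight E₁ (A ⊗ₖ E₂ B) = E₁ A ⊗ₖ E₂ B := by
    ext p q
    have hblock : (Matrix.of fun a b => (A ⊗ₖ E₂ B) (a, p.2) (b, q.2)) = E₂ B p.2 q.2 • A := by
      ext a b
      exact mul_comm _ _
    rw [blockApplyRight, of_apply, hblock, map_smul, Matrix.smul_apply, smul_eq_mul, mul_comm,
      kroneckerMap_apply]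
  exact (congrArg (blockApplyRight E₁) hright).trans hleft

theorem choi_tensorChannel {n₁ m₁ n₂ m₂ : Type} [DecidableEq n₁] [DecidableEq n₂]
    (E₁ : Matrix n₁ n₁ ℂ →ₗ[ℂ] Matrix m₁ m₁ ℂ) (E₂ : Matrix n₂ n₂ ℂ →ₗ[ℂ] Matrix m₂ m₂ ℂ) :
    choi (tensorChannel E₁ E₂) = (choi E₁ ⊗ₖ choi E₂).submatrix
      (Equiv.prodProdProdComm n₁ n₂ m₁ m₂) (Equiv.prodProdProdComm n₁ n₂ m₁ m₂) := by
  ext p q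
  have hsingle : single p.1 q.1 (1 : ℂ) =
      single p.1.1 q.1.1 (1 : ℂ) ⊗ₖ single p.1.2 q.1.2 (1 : ℂ) := by
    rw [single_kronecker_single, mul_one]
  simp only [choi, of_apply, submatrix_apply, hsingle, tensorChannel_kronecker,
    kroneckerMap_apply, Equiv.prodProdProdComm_apply]

theorem IsCompletelyPositive.tensorChannel {n₁ m₁ n₂ m₂ : Type} [Finite n₁] [Finite m₁]
    [Finite n₂] [Finite m₂] {E₁ : Matrix n₁ n₁ ℂ →ₗ[ℂ] Matrix m₁ m₁ ℂ}
    {E₂ : Matrix n₂ n₂ ℂ →ₗ[ℂ] Matrix m₂ m₂ ℂ} (hE₁ : IsCompletelyPositive E₁)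
    (hE₂ : IsCompletelyPositive E₂) : IsCompletelyPositive (tensorChannel E₁ E₂) := by
  classical
  rw [isCompletelyPositive_iff_choi_posSemidef] at hE₁ hE₂ ⊢
  rw [choi_tensorChannel]
  exact (hE₁.kronecker hE₂).submatrix _

theorem geomRenyi_channel_additive_general {n₁ n₂ : Type} [Fintype n₁] [Fintype n₂] {α : ℝ}
    (hα : 1 < α ∧ α ≤ 2) {E₁ F₁ : Matrix n₁ n₁ ℂ →ₗ[ℂ] Matrix m₁ m₁ ℂ}
    {E₂ F₂ : Matrix n₂ n₂ ℂ →ₗ[ℂ] Matrix m₂ m₂ ℂ}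
    (hE₁ : IsCompletelyPositive E₁) (hF₁ : IsCompletelyPositive F₁)
    (hE₂ : IsCompletelyPositive E₂) (hF₂ : IsCompletelyPositive F₂) :
    chDiv (geomD α) (tensorChannel E₁ E₂) (tensorChannel F₁ F₂) =
      chDiv (geomD α) E₁ F₁ + chDiv (geomD α) E₂ F₂ := by
  classical
  rw [chDiv_geomD_eq_geomRenyiChoi hα (hE₁.tensorChannel hE₂) (hF₁.tensorChannel hF₂),
    chDiv_geomD_eq_geomRenyiChoi hα hE₁ hF₁, chDiv_geomD_eq_geomRenyiChoi hα hE₂ hF₂,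
    choi_tensorChannel, choi_tensorChannel]
  rw [isCompletelyPositive_iff_choi_posSemidef] at hE₁ hF₁ hE₂ hF₂
  exact geomRenyiChoi_kronecker hα.1 hE₁ hF₁ hE₂ hF₂

end Additivity

/-- Additivity of the geometric Rényi channel divergence. -/
theorem geomRenyi_channel_additive {d₁ d₁' d₂ d₂' : ℕ} (α : ℝ) (hα : 1 < α ∧ α ≤ 2)
    (E₁ F₁ : Matrix (Fin d₁) (Fin d₁) ℂ →ₗ[ℂ] Matrix (Fin d₁') (Fin d₁') ℂ)
    (E₂ F₂ : Matrix (Fin d₂) (Fin d₂) ℂ →ₗ[ℂ] Matrix (Fin d₂') (Fin d₂') ℂ)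
    (hE₁ : IsQChannel E₁) (hF₁ : IsQChannel F₁)
    (hE₂ : IsQChannel E₂) (hF₂ : IsQChannel F₂) :
    chDiv (geomD α) (tensorChannel E₁ E₂) (tensorChannel F₁ F₂) =
      chDiv (geomD α) E₁ F₁ + chDiv (geomD α) E₂ F₂ := by
  exact geomRenyi_channel_additive_general hα hE₁.2 hF₁.2 hE₂.2 hF₂.2

end QCD
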